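/- arXiv:2001.08079 — 3 statements merged into one kernel-verified Lean document; each statement's English description precedes it below -/
import Mathlib

section
/- For any prime p ≡ 3 (mod 4) and any positive integer m, the sum over k from 0 to mp-1 of ((1/2)_k)^3 / (k!)^3 is congruent to 0 modulo p^2 (i.e., this rational number has p-adic valuation at least 2). -/
open Finset

/-- The rising factorial (Pochhammer symbol) `(a)_k = a(a+1)⋯(a+k-1)` for `a : ℚ`. -/
def risingFactorial (a : ℚ) (k : ℕ) : ℚ := ∏ i ∈ Finset.range k, (a + i)

namespace Stmt2Aux

/-! ### The exact identity `∑ (-1)^i C(n,i) C(n+i,i) C(2i,i) / 4^i = 0` for odd `n` -/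

def f (n : ℚ) (i : ℕ) : ℚ :=
  ∏ t ∈ range i, (-((t : ℚ) + 1/2) * (n + t + 1) * (n - t) / ((t : ℚ) + 1) ^ 3)

def g (n : ℚ) (i : ℕ) : ℚ :=
  ∏ t ∈ range i, (-((t : ℚ) + 1/2) * (n + t + 1) * (n + 2 - t) / ((t : ℚ) + 1) ^ 3)

lemma f_g (n : ℚ) (i : ℕ) :
    f n i * ((n + 1) * (n + 2)) = g n i * ((n + 2 - i) * (n + 1 - i)) := by
  induction i with
  | zero => simp [f, g]; ring
  | succ i ih =>
    have h : ((i : ℚ) + 1) ≠ 0 := by positivity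
    rw [f, g, prod_range_succ, prod_range_succ, ← f, ← g]
    push_cast
    linear_combination (-((i : ℚ) + 1/2) * (n + i + 1) * (n - i) / ((i : ℚ) + 1) ^ 3) * ih

lemma f_g' (n : ℚ) (i : ℕ) :
    f (n + 2) i * ((n + 1) * (n + 2)) = g n i * ((n + i + 1) * (n + i + 2)) := by
  induction i with
  | zero => simp [f, g]
  | succ i ih =>
    rw [f, g, prod_range_succ, prod_range_succ, ← f, ← g]
    push_cast
    linear_combination
      (-((i : ℚ) + 1/2) * (n + 2 + i + 1) * (n + 2 - i) / ((i : ℚ) + 1) ^ 3) * ih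

lemma tele (n : ℚ) (N : ℕ) :
    ∑ i ∈ range N, ((n + 2) ^ 2 * f (n + 2) i - (n + 1) ^ 2 * f n i) * ((n + 1) * (n + 2))
      = g n N * ((N : ℚ) ^ 3 * (-2 * (2 * n + 3))) := by
  induction N with
  | zero => simp
  | succ N ih =>
    have h : ((N : ℚ) + 1) ≠ 0 := by positivity
    have e1 := f_g n N
    have e2 := f_g' n N
    rw [sum_range_succ, ih]
    have e3 : g n (N + 1) * ((N : ℚ) + 1) ^ 3
        = g n N * (-((N : ℚ) + 1/2) * (n + N + 1) * (n + 2 - N)) := by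
      rw [g, prod_range_succ, ← g]
      field_simp
    push_cast
    linear_combination (n + 2) ^ 2 * e2 - (n + 1) ^ 2 * e1 + (2 * (2 * n + 3)) * e3

lemma f_zero (n : ℕ) (i : ℕ) (h : n < i) : f n i = 0 := by
  rw [f]
  exact prod_eq_zero (mem_range.2 h) (by simp)

lemma legendre (k : ℕ) : ∑ i ∈ range (2 * k + 1 + 1), f ((2 * k + 1 : ℕ) : ℚ) i = 0 := by
  induction k with
  | zero => simp [sum_range_succ, f]; norm_num
  | succ k ih =>
    set n : ℕ := 2 * k + 1 with hn
    have hn2 : 2 * (k + 1) + 1 = n + 2 := by omega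
    rw [hn2]
    have t := tele n (n + 2 + 1)
    have gz : g n (n + 2 + 1) = 0 := by
      rw [g]
      exact prod_eq_zero (mem_range.2 (Nat.lt_succ_self (n + 2))) (by push_cast; simp)
    rw [gz, zero_mul, ← sum_mul, sum_sub_distrib, ← mul_sum, ← mul_sum] at t
    have e : ∑ i ∈ range (n + 2 + 1), f (n : ℚ) i = 0 := by
      rw [sum_range_succ, sum_range_succ, ih, f_zero _ _ (by omega), f_zero _ _ (by omega)]
      simp
    rw [e] at t
    have p1 : ((n : ℚ) + 1) ≠ 0 := by positivity
    have p2 : ((n : ℚ) + 2) ≠ 0 := by positivity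
    push_cast
    simpa [p1, p2] using t

lemma f_eq (n i : ℕ) : f n i * 4 ^ i =
    (-1) ^ i * (n.choose i : ℚ) * ((n + i).choose i : ℚ) * (Nat.centralBinom i : ℚ) := by
  induction i with
  | zero => simp [f]
  | succ i ih =>
    have h : ((i : ℚ) + 1) ≠ 0 := by positivity
    have e1 : (n.choose (i + 1) : ℚ) * (i + 1) = n.choose i * (n - i) := by
      rcases le_or_gt i n with hi | hi
      · have := Nat.choose_succ_right_eq n i
        have t : ((n.choose (i + 1) * (i + 1) : ℕ) : ℚ) = (n.choose i * (n - i) : ℕ) := by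
          rw [this]
        push_cast [Nat.cast_sub hi] at t
        exact t
      · rw [Nat.choose_eq_zero_of_lt hi, Nat.choose_eq_zero_of_lt (by omega)]; simp
    have e2 : ((n + (i + 1)).choose (i + 1) : ℚ) * (i + 1) = (n + i).choose i * (n + i + 1) := by
      have := Nat.add_one_mul_choose_eq (n + i) i
      have t : (((n + i + 1) * (n + i).choose i : ℕ) : ℚ)
          = ((n + i + 1).choose (i + 1) * (i + 1) : ℕ) := by rw [this]
      push_cast at t
      rw [← add_assoc]
      linarith
    have e3 : ((i : ℚ) + 1) * (Nat.centralBinom (i + 1) : ℚ)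
        = 2 * (2 * i + 1) * Nat.centralBinom i := by
      exact_mod_cast Nat.succ_mul_centralBinom_succ i
    have e4 : f n (i + 1) * ((i : ℚ) + 1) ^ 3
        = f n i * (-((i : ℚ) + 1/2) * (n + i + 1) * (n - i)) := by
      rw [f, prod_range_succ, ← f]
      field_simp
    have h3 : ((i : ℚ) + 1) ^ 3 ≠ 0 := by positivity
    apply mul_right_cancel₀ h3
    calc _ = (f n (i + 1) * ((i : ℚ) + 1) ^ 3) * 4 ^ i * 4 := by ring
      _ = (f n i * 4 ^ i) * (-(4 * i + 2) * (n + i + 1) * (n - i)) := by rw [e4]; ring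
      _ = (-1) ^ (i + 1) * ((n.choose i : ℚ) * (n - i)) * (((n + i).choose i : ℚ) * (n + i + 1))
          * (2 * (2 * i + 1) * Nat.centralBinom i) := by rw [ih]; ring
      _ = _ := by rw [← e1, ← e2, ← e3]; ring

lemma legendre_int (n : ℕ) (hn : n % 2 = 1) :
    ∑ i ∈ range (n + 1), (-1 : ℤ) ^ i * (n.choose i : ℤ) * ((n + i).choose i : ℤ)
      * (Nat.centralBinom i : ℤ) * 4 ^ (n - i) = 0 := by
  have h := legendre (n / 2)
  rw [show 2 * (n / 2) + 1 = n by omega] at h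
  have : ((∑ i ∈ range (n + 1), (-1 : ℤ) ^ i * (n.choose i : ℤ) * ((n + i).choose i : ℤ)
      * (Nat.centralBinom i : ℤ) * 4 ^ (n - i) : ℤ) : ℚ) = 4 ^ n * ∑ i ∈ range (n + 1), f n i := by
    push_cast
    rw [mul_sum]
    refine sum_congr rfl fun i hi => ?_
    have hi' : i ≤ n := by simp at hi; omega
    rw [← f_eq, show (4 : ℚ) ^ n = 4 ^ i * 4 ^ (n - i) by rw [← pow_add]; congr 1; omega]
    ring
  rw [h, mul_zero] at this
  exact_mod_cast this

/-! ### Computations modulo `p ^ 2` -/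

section
variable (p : ℕ)

abbrev R := ZMod (p ^ 2)

def c (k : ℕ) : R p := (Nat.centralBinom k : R p) * ((4 : ℕ) : R p)⁻¹ ^ k
def al (i : ℕ) : R p := ∑ t ∈ range i, 2 * ((2 * t + 1 : ℕ) : R p)⁻¹
def H (i : ℕ) : R p := ∑ t ∈ range i, ((t + 1 : ℕ) : R p)⁻¹

lemma al_succ (i : ℕ) : al p (i + 1) = al p i + 2 * ((2 * i + 1 : ℕ) : R p)⁻¹ := by
  simp only [al, sum_range_succ]
lemma H_succ (i : ℕ) : H p (i + 1) = H p i + ((i + 1 : ℕ) : R p)⁻¹ := by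
  simp only [H, sum_range_succ]

variable {p}

lemma pp (hp : p.Prime) : (p : R p) * (p : R p) = 0 := by
  rw [← pow_two, ← Nat.cast_pow]; exact ZMod.natCast_self _

lemma inv_of (hp : p.Prime) (k : ℕ) (hk : ¬ p ∣ k) : (k : R p) * (k : R p)⁻¹ = 1 :=
  ZMod.coe_mul_inv_eq_one k
    (Nat.Coprime.pow_right 2 ((Nat.Prime.coprime_iff_not_dvd hp).2 hk).symm)

lemma inv_lt (hp : p.Prime) (k : ℕ) (h0 : 0 < k) (hk : k < p) : (k : R p) * (k : R p)⁻¹ = 1 :=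
  inv_of hp k (Nat.not_dvd_of_pos_of_lt h0 hk)

lemma cancel (hp : p.Prime) (k : ℕ) (hk : ¬ p ∣ k) {x y : R p} (e : (k : R p) * x = k * y) : x = y := by
  have := inv_of hp k hk
  linear_combination ((k : R p)⁻¹) * e - (x - y) * this

lemma ndvd2 (hp : p.Prime) (h : p % 4 = 3) : ¬ p ∣ 2 := fun hd => by
  have := Nat.le_of_dvd (by norm_num) hd
  omega

lemma ndvd_mul2 (hp : p.Prime) (h : p % 4 = 3) (k : ℕ) (hk : ¬ p ∣ k) : ¬ p ∣ 2 * k := fun hd =>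
  (hp.dvd_mul.1 hd).elim (ndvd2 hp h) hk

lemma inv4 (hp : p.Prime) (h : p % 4 = 3) : (4 : R p) * ((4 : ℕ) : R p)⁻¹ = 1 :=
  inv_of hp 4 (ndvd_mul2 hp h 2 (ndvd2 hp h))

lemma c_succ (hp : p.Prime) (h : p % 4 = 3) (k : ℕ) : 2 * ((k : R p) + 1) * c p (k + 1) = (2 * k + 1) * c p k := by
  have e3 : ((k : R p) + 1) * (Nat.centralBinom (k + 1) : R p)
        = 2 * (2 * k + 1) * Nat.centralBinom k := by
    exact_mod_cast congrArg (Nat.cast : ℕ → R p) (Nat.succ_mul_centralBinom_succ k)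
  have e4 := inv4 hp h
  rw [c, c, pow_succ (((4 : ℕ) : R p)⁻¹) k]
  linear_combination 2 * ((4 : ℕ) : R p)⁻¹ ^ k * ((4 : ℕ) : R p)⁻¹ * e3
    + (2 * k + 1) * Nat.centralBinom k * ((4 : ℕ) : R p)⁻¹ ^ k * e4

lemma c_block (hp : p.Prime) (h : p % 4 = 3) (j i : ℕ) (hi : i ≤ p / 2) :
    c p (j * p + i) = c p (j * p) * c p i * (1 + j * p * (al p i - H p i)) := by
  induction i with
  | zero => simp [al, H, c]
  | succ i ih =>
    have ih := ih (by omega)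
    have r1 := c_succ hp h (j * p + i)
    have r2 := c_succ hp h i
    have v := inv_lt hp (2 * i + 1) (by omega) (by omega)
    have w := inv_lt hp (i + 1) (by omega) (by omega)
    have e := pp hp
    have nd : ¬ p ∣ (j * p + i + 1) := fun hd => by
      have : p ∣ i + 1 := by
        rw [add_assoc] at hd
        exact (Nat.dvd_add_right (Dvd.intro_left j rfl)).1 hd
      exact Nat.not_dvd_of_pos_of_lt (by omega) (by omega) this
    apply cancel hp _ (ndvd_mul2 hp h _ nd)
    rw [al_succ, H_succ]
    generalize ((2 * i + 1 : ℕ) : R p)⁻¹ = V at *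
    generalize ((i + 1 : ℕ) : R p)⁻¹ = W at *
    push_cast at *
    rw [ih] at r1
    rw [← add_assoc, r1]
    generalize c p (j * p) = X at *
    generalize c p (i + 1) = C' at *
    generalize c p i = C at *
    generalize al p i = a at *
    generalize H p i = b at *
    generalize (j : R p) = J at *
    generalize (p : R p) = P at *
    generalize (i : R p) = I at *
    grind

lemma b_eq (hp : p.Prime) (h : p % 4 = 3) (i : ℕ) (hi : i ≤ p / 2) :
    2 * ((-1) ^ i * ((p / 2).choose i : R p)) = c p i * (2 - p * al p i) := by
  induction i with
  | zero => simp [al, c]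
  | succ i ih =>
    have ih := ih (by omega)
    have r2 := c_succ hp h i
    have v := inv_lt hp (2 * i + 1) (by omega) (by omega)
    have e := pp hp
    have e1 : ((p / 2).choose (i + 1) : R p) * (2 * (i + 1))
        = ((p / 2).choose i) * (p - 1 - 2 * i) := by
      have := Nat.choose_succ_right_eq (p / 2) i
      have t : (((p / 2).choose (i + 1) * (i + 1) : ℕ) : R p)
          = ((p / 2).choose i * (p / 2 - i) : ℕ) := by rw [this]
      have t2 : ((2 * (p / 2 - i) + 2 * i + 1 : ℕ) : R p) = (p : ℕ) := by
        congr 1; omega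
      push_cast at t t2
      linear_combination 2 * t + ((p / 2).choose i) * t2
    apply cancel hp (2 * (i + 1))
      (ndvd_mul2 hp h _ (Nat.not_dvd_of_pos_of_lt (by omega) (by omega)))
    rw [al_succ, pow_succ (-1 : R p) i]
    generalize ((2 * i + 1 : ℕ) : R p)⁻¹ = V at *
    push_cast at *
    generalize ((p / 2).choose (i + 1) : R p) = B' at *
    generalize ((p / 2).choose i : R p) = B at *
    generalize c p (i + 1) = C' at *
    generalize c p i = C at *
    generalize al p i = a at *
    generalize (p : R p) = P at *
    generalize (i : R p) = I at *
    generalize (-1 : R p) ^ i = s at *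
    linear_combination -2 * s * e1 - (P - 1 - 2 * I) * ih - (2 - P * (a + 2 * V)) * r2
      + 2 * P * C * v + C * a * e

lemma d_eq (hp : p.Prime) (h : p % 4 = 3) (i : ℕ) (hi : i ≤ p / 2) :
    2 * ((p / 2 + i).choose i : R p) = c p i * (2 + p * al p i) := by
  induction i with
  | zero => simp [al, c]
  | succ i ih =>
    have ih := ih (by omega)
    have r2 := c_succ hp h i
    have v := inv_lt hp (2 * i + 1) (by omega) (by omega)
    have e := pp hp
    have e1 : ((p / 2 + (i + 1)).choose (i + 1) : R p) * (2 * (i + 1))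
        = ((p / 2 + i).choose i) * (p + 1 + 2 * i) := by
      have := Nat.add_one_mul_choose_eq (p / 2 + i) i
      have t : (((p / 2 + i + 1) * (p / 2 + i).choose i : ℕ) : R p)
          = ((p / 2 + i + 1).choose (i + 1) * (i + 1) : ℕ) := by rw [this]
      have t2 : ((2 * (p / 2) + 1 : ℕ) : R p) = (p : ℕ) := by
        congr 1; omega
      rw [← add_assoc]
      push_cast at t t2
      linear_combination - 2 * t + ((p / 2 + i).choose i) * t2
    apply cancel hp (2 * (i + 1))
      (ndvd_mul2 hp h _ (Nat.not_dvd_of_pos_of_lt (by omega) (by omega)))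
    rw [al_succ]
    generalize ((2 * i + 1 : ℕ) : R p)⁻¹ = V at *
    push_cast at *
    generalize ((p / 2 + (i + 1)).choose (i + 1) : R p) = B' at *
    generalize ((p / 2 + i).choose i : R p) = B at *
    generalize c p (i + 1) = C' at *
    generalize c p i = C at *
    generalize al p i = a at *
    generalize (p : R p) = P at *
    generalize (i : R p) = I at *
    linear_combination 2 * e1 + (P + 1 + 2 * I) * ih - (2 + P * (a + 2 * V)) * r2
      - 2 * P * C * v + C * a * e

lemma S0 (hp : p.Prime) (h : p % 4 = 3) : ∑ i ∈ range (p / 2 + 1), c p i ^ 3 = 0 := by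
  have L := congrArg (Int.cast : ℤ → R p) (legendre_int (p / 2) (by omega))
  push_cast at L
  apply cancel hp 4 (ndvd_mul2 hp h 2 (ndvd2 hp h))
  have key : ∀ i ∈ range (p / 2 + 1), ((4 : ℕ) : R p) * c p i ^ 3 =
      4 * ((-1) ^ i * ((p / 2).choose i : R p) * ((p / 2 + i).choose i : R p)
      * (Nat.centralBinom i : R p) * 4 ^ (p / 2 - i)) * ((4 : ℕ) : R p)⁻¹ ^ (p / 2) := by
    intro i hi
    have hi' : i ≤ p / 2 := by simp at hi; omega
    have e1 := b_eq hp h i hi'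
    have e2 := d_eq hp h i hi'
    have e := pp hp
    have e4 : (4 : R p) ^ (p / 2 - i) * ((4 : ℕ) : R p)⁻¹ ^ (p / 2 - i) = 1 := by
      rw [← mul_pow, inv4 hp h, one_pow]
    have e5 : ((4 : ℕ) : R p)⁻¹ ^ (p / 2)
        = ((4 : ℕ) : R p)⁻¹ ^ i * ((4 : ℕ) : R p)⁻¹ ^ (p / 2 - i) := by
      rw [← pow_add]; congr 1; omega
    calc ((4 : ℕ) : R p) * c p i ^ 3
        = (c p i * (2 - p * al p i)) * (c p i * (2 + p * al p i)) * c p i := by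
          push_cast
          linear_combination (c p i ^ 3 * al p i ^ 2) * e
      _ = (2 * ((-1) ^ i * ((p / 2).choose i : R p))) * (2 * ((p / 2 + i).choose i : R p))
          * ((Nat.centralBinom i : R p) * ((4 : ℕ) : R p)⁻¹ ^ i) := by rw [← e1, ← e2, c]
      _ = _ := by
          rw [e5]
          linear_combination (-4 * ((-1) ^ i * ((p / 2).choose i : R p)
            * ((p / 2 + i).choose i : R p) * (Nat.centralBinom i : R p)
            * ((4 : ℕ) : R p)⁻¹ ^ i)) * e4
  rw [mul_sum, sum_congr rfl key, ← sum_mul, ← mul_sum, L]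
  simp

/-- Antisymmetric sums over reflected indices. -/
lemma anti (hp : p.Prime) (h : p % 4 = 3) : ∑ i ∈ range (p / 2 + 1), ((-1) ^ i * ((p / 2).choose i : R p)) ^ 3 = 0 := by
  have r := sum_range_reflect (fun i => ((-1) ^ i * ((p / 2).choose i : R p)) ^ 3) (p / 2 + 1)
  apply cancel hp 2 (ndvd2 hp h)
  have key : ∀ i ∈ range (p / 2 + 1),
      ((-1) ^ (p / 2 + 1 - 1 - i) * ((p / 2).choose (p / 2 + 1 - 1 - i) : R p)) ^ 3
      = - ((-1) ^ i * ((p / 2).choose i : R p)) ^ 3 := by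
    intro i hi
    have hi' : i ≤ p / 2 := by simp at hi; omega
    rw [show p / 2 + 1 - 1 - i = p / 2 - i by omega, Nat.choose_symm hi']
    have : (-1 : R p) ^ (p / 2 - i) = - (-1) ^ i := by
      have o : (-1 : R p) ^ (p / 2) = -1 := Odd.neg_one_pow (Nat.odd_iff.2 (by omega))
      rw [show p / 2 = (p / 2 - i) + i by omega, pow_add] at o
      have q : (-1 : R p) ^ i * (-1) ^ i = 1 := by rw [← mul_pow]; simp
      linear_combination (-1 : R p) ^ i * o - (-1 : R p) ^ (p / 2 - i) * q
    rw [this]; ring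
  rw [sum_congr rfl key, sum_neg_distrib] at r
  push_cast
  linear_combination -r

lemma p_c (hp : p.Prime) (h : p % 4 = 3) (i : ℕ) (hi : i ≤ p / 2) :
    (p : R p) * c p i = p * ((-1) ^ i * ((p / 2).choose i : R p)) := by
  apply cancel hp 2 (ndvd2 hp h)
  have e := pp hp
  push_cast
  linear_combination -p * b_eq hp h i hi + c p i * al p i * e

lemma p_c3 (hp : p.Prime) (h : p % 4 = 3) (i : ℕ) (hi : i ≤ p / 2) :
    (p : R p) * c p i ^ 3 = p * ((-1) ^ i * ((p / 2).choose i : R p)) ^ 3 := by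
  have := p_c hp h i hi
  generalize c p i = C at *
  generalize ((-1) ^ i * ((p / 2).choose i : R p)) = D at *
  linear_combination (C ^ 2 + C * D + D ^ 2) * this

lemma p_al (hp : p.Prime) (h : p % 4 = 3) (i : ℕ) (hi : i ≤ p / 2) :
    (p : R p) * al p i = p * (H p (p / 2 - i) - H p (p / 2)) := by
  induction i with
  | zero => simp [al]
  | succ i ih =>
    have ih := ih (by omega)
    have e := pp hp
    obtain ⟨s, hs⟩ : ∃ s, p / 2 = s + (i + 1) := ⟨p / 2 - (i + 1), by omega⟩
    have h1 : p / 2 - (i + 1) = s := by omega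
    have h2 : p / 2 - i = s + 1 := by omega
    rw [h2, H_succ] at ih
    rw [h1, al_succ]
    have v := inv_lt hp (2 * i + 1) (by omega) (by omega)
    have w := inv_lt hp (s + 1) (by omega) (by omega)
    have t2 : ((2 * (s + 1) + (2 * i + 1) : ℕ) : R p) = (p : ℕ) := by
      congr 1; omega
    generalize ((2 * i + 1 : ℕ) : R p)⁻¹ = V at *
    generalize ((s + 1 : ℕ) : R p)⁻¹ = W at *
    push_cast at *
    have : (p : R p) * (2 * V + W) = 0 := by
      linear_combination (-(p : R p) * W) * v - 2 * p * V * w + V * W * e + p * V * W * t2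
    linear_combination ih + this

lemma AB (hp : p.Prime) (h : p % 4 = 3) : (p : R p) * ∑ i ∈ range (p / 2 + 1), c p i ^ 3 * al p i
    = - (p * ∑ i ∈ range (p / 2 + 1), c p i ^ 3 * H p i) := by
  have r := sum_range_reflect
    (fun i => (p : R p) * ((-1) ^ i * ((p / 2).choose i : R p)) ^ 3 * H p i) (p / 2 + 1)
  have key : ∀ i ∈ range (p / 2 + 1),
      (p : R p) * ((-1) ^ (p / 2 + 1 - 1 - i) * ((p / 2).choose (p / 2 + 1 - 1 - i) : R p)) ^ 3
        * H p (p / 2 + 1 - 1 - i)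
      = - (p * (c p i ^ 3 * al p i))
        - p * H p (p / 2) * ((-1) ^ i * ((p / 2).choose i : R p)) ^ 3 := by
    intro i hi
    have hi' : i ≤ p / 2 := by simp at hi; omega
    rw [show p / 2 + 1 - 1 - i = p / 2 - i by omega, Nat.choose_symm hi']
    have : (-1 : R p) ^ (p / 2 - i) = - (-1) ^ i := by
      have o : (-1 : R p) ^ (p / 2) = -1 := Odd.neg_one_pow (Nat.odd_iff.2 (by omega))
      rw [show p / 2 = (p / 2 - i) + i by omega, pow_add] at o
      have q : (-1 : R p) ^ i * (-1) ^ i = 1 := by rw [← mul_pow]; simp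
      linear_combination (-1 : R p) ^ i * o - (-1 : R p) ^ (p / 2 - i) * q
    rw [this]
    have k1 := p_c3 hp h i hi'
    have k2 := p_al hp h i hi'
    linear_combination (al p i) * k1
      + ((-1) ^ i * ((p / 2).choose i : R p)) ^ 3 * k2
  have key2 : ∀ i ∈ range (p / 2 + 1),
      (p : R p) * ((-1) ^ i * ((p / 2).choose i : R p)) ^ 3 * H p i
       = p * (c p i ^ 3 * H p i) := by
    intro i hi
    have hi' : i ≤ p / 2 := by simp at hi; omega
    rw [← p_c3 hp h i hi']; ring
  rw [sum_congr rfl key, sum_congr rfl key2, sum_sub_distrib, sum_neg_distrib, ← mul_sum,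
    ← mul_sum, ← mul_sum, anti hp h] at r
  linear_combination -r

lemma A3 (hp : p.Prime) (h : p % 4 = 3) : 3 * ((p : R p) * ∑ i ∈ range (p / 2 + 1), c p i ^ 3 * al p i) = 0 := by
  have a := anti hp h
  have s := S0 hp h
  have key : ∀ i ∈ range (p / 2 + 1),
      3 * ((p : R p) * (c p i ^ 3 * al p i)) =
        2 * c p i ^ 3 - 2 * ((-1) ^ i * ((p / 2).choose i : R p)) ^ 3 := by
    intro i hi
    have hi' : i ≤ p / 2 := by simp at hi; omega
    have e := pp hp
    have b := b_eq hp h i hi'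
    apply cancel hp 4 (ndvd_mul2 hp h 2 (ndvd2 hp h))
    generalize ((-1) ^ i * ((p / 2).choose i : R p)) = D at *
    have b3 : 8 * D ^ 3 = (c p i * (2 - p * al p i)) ^ 3 := by rw [← b]; ring
    push_cast
    linear_combination b3 + c p i ^ 3 * (6 * al p i ^ 2 - p * al p i ^ 3) * e
  rw [mul_sum, mul_sum, sum_congr rfl key, sum_sub_distrib, ← mul_sum, ← mul_sum, a, s]
  simp

lemma dvd_c (hp : p.Prime) (h : p % 4 = 3) (j i : ℕ) (hi : i + (p / 2 + 1) < p) :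
    (p : R p) ∣ c p (j * p + (i + (p / 2 + 1))) := by
  have nd : ∀ r, r + 1 < p → ¬ p ∣ (j * p + r + 1) := fun r hr hd => by
    have : p ∣ r + 1 := by
      rw [add_assoc] at hd
      exact (Nat.dvd_add_right (Dvd.intro_left j rfl)).1 hd
    exact Nat.not_dvd_of_pos_of_lt (by omega) hr this
  have step : ∀ r, r + 1 < p → (p : R p) ∣ (2 * ((j * p + r : ℕ) : R p) + 1) * c p (j * p + r) →
      (p : R p) ∣ c p (j * p + (r + 1)) := by
    intro r hr ⟨q, hq⟩
    have r1 := c_succ hp h (j * p + r)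
    rw [hq] at r1
    have v := inv_of hp _ (ndvd_mul2 hp h _ (nd r hr))
    refine ⟨((2 * (j * p + r + 1) : ℕ) : R p)⁻¹ * q, ?_⟩
    generalize ((2 * (j * p + r + 1) : ℕ) : R p)⁻¹ = V at *
    push_cast at *
    rw [← add_assoc]
    linear_combination V * r1 - c p (j * p + r + 1) * v
  induction i with
  | zero =>
    rw [zero_add]
    apply step _ (by omega)
    apply Dvd.dvd.mul_right
    have t2 : ((2 * (p / 2) + 1 : ℕ) : R p) = (p : ℕ) := by
      congr 1; omega
    push_cast at t2 ⊢
    exact ⟨2 * j + 1, by linear_combination t2⟩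
  | succ i ih =>
    rw [show i + 1 + (p / 2 + 1) = i + (p / 2 + 1) + 1 by omega]
    exact step _ (by omega) (Dvd.dvd.mul_left (ih (by omega)) _)

lemma block (hp : p.Prime) (h : p % 4 = 3) (j : ℕ) : ∑ i ∈ range p, c p (j * p + i) ^ 3 = 0 := by
  have e := pp hp
  have hs : p = (p / 2 + 1) + p / 2 := by omega
  have : ∑ i ∈ range p, c p (j * p + i) ^ 3
      = ∑ i ∈ range ((p / 2 + 1) + p / 2), c p (j * p + i) ^ 3 := by rw [← hs]
  rw [this, sum_range_add]
  have z : ∀ i ∈ range (p / 2), c p (j * p + (p / 2 + 1 + i)) ^ 3 = 0 := by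
    intro i hi
    simp only [mem_range] at hi
    obtain ⟨q, hq⟩ := dvd_c hp h j i (by omega)
    rw [add_comm (p / 2 + 1) i, hq]
    linear_combination p * q ^ 3 * e
  have k : ∀ i ∈ range (p / 2 + 1), c p (j * p + i) ^ 3
      = c p (j * p) ^ 3 * c p i ^ 3 + c p (j * p) ^ 3 * j * 3 * p * (c p i ^ 3 * al p i)
        - c p (j * p) ^ 3 * j * 3 * p * (c p i ^ 3 * H p i) := by
    intro i hi
    have hi' : i ≤ p / 2 := by simp at hi; omega
    rw [c_block hp h j i hi']
    generalize c p (j * p) = X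
    generalize c p i = C
    obtain ⟨D, hD⟩ : ∃ D, D = al p i - H p i := ⟨_, rfl⟩
    rw [show al p i = D + H p i by rw [hD]; ring]
    linear_combination (3 * X ^ 3 * C ^ 3 * j ^ 2 * D ^ 2 + X ^ 3 * C ^ 3 * j ^ 3 * D ^ 3 * p) * e
  rw [sum_eq_zero z, sum_congr rfl k, sum_sub_distrib, sum_add_distrib, ← mul_sum, ← mul_sum,
    ← mul_sum, S0 hp h]
  have a3 := A3 hp h
  have ab := AB hp h
  linear_combination (2 * c p (j * p) ^ 3 * j) * a3 - 3 * (c p (j * p) ^ 3 * j) * ab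

lemma total (hp : p.Prime) (h : p % 4 = 3) (m : ℕ) : ∑ k ∈ range (m * p), c p k ^ 3 = 0 := by
  induction m with
  | zero => simp
  | succ m ih => rw [Nat.succ_mul, sum_range_add, ih, block hp h, add_zero]

lemma total_int (hp : p.Prime) (h : p % 4 = 3) (m : ℕ) : ((p ^ 2 : ℕ) : ℤ) ∣
    ∑ k ∈ range (m * p), (Nat.centralBinom k : ℤ) ^ 3 * 64 ^ (m * p - k) := by
  rw [← ZMod.intCast_zmod_eq_zero_iff_dvd]
  have t := total hp h m
  push_cast
  have key : ∀ k ∈ range (m * p), (Nat.centralBinom k : R p) ^ 3 * 64 ^ (m * p - k)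
      = 64 ^ (m * p) * c p k ^ 3 := by
    intro k hk
    simp only [mem_range] at hk
    have e : (64 : R p) ^ k * (((4 : ℕ) : R p)⁻¹ ^ k) ^ 3 = 1 := by
      have : (64 : R p) ^ k = (4 ^ k) ^ 3 := by
        rw [← pow_mul, mul_comm, pow_mul]; norm_num
      rw [this, ← mul_pow, ← mul_pow, inv4 hp h]; simp
    rw [c, show (64 : R p) ^ (m * p) = 64 ^ k * 64 ^ (m * p - k) by
      rw [← pow_add]; congr 1; omega]
    linear_combination (-(Nat.centralBinom k : R p) ^ 3 * 64 ^ (m * p - k)) * e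
  rw [sum_congr rfl key, ← mul_sum, t, mul_zero]

end

lemma rf_eq (k : ℕ) :
    risingFactorial (1/2) k / (k.factorial : ℚ) * 4 ^ k = Nat.centralBinom k := by
  induction k with
  | zero => simp [risingFactorial]
  | succ k ih =>
    have e3 : ((k : ℚ) + 1) * (Nat.centralBinom (k + 1) : ℚ)
        = 2 * (2 * k + 1) * Nat.centralBinom k := by
      exact_mod_cast Nat.succ_mul_centralBinom_succ k
    have hk : ((k : ℚ) + 1) ≠ 0 := by positivity
    apply mul_left_cancel₀ hk
    rw [e3, ← ih, risingFactorial, prod_range_succ, ← risingFactorial, Nat.factorial_succ]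
    have : (k.factorial : ℚ) ≠ 0 := by positivity
    push_cast
    field_simp
    ring

end Stmt2Aux

/-- For any prime `p ≡ 3 (mod 4)` and positive integer `m`,
`∑_{k=0}^{mp-1} (1/2)_k^3 / k!^3 ≡ 0 (mod p^2)`. -/
theorem stmt2 (p m : ℕ) (hp : p.Prime) (h : p % 4 = 3) (hm : 0 < m) :
    ∃ a b : ℤ, ¬ ((p : ℤ) ∣ b) ∧
      (∑ k ∈ Finset.range (m * p),
          risingFactorial (1/2) k ^ 3 / (k.factorial : ℚ) ^ 3) * (b : ℚ)
        = (p : ℚ) ^ 2 * (a : ℚ) := by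
  obtain ⟨a, ha⟩ := Stmt2Aux.total_int hp h m
  refine ⟨a, 64 ^ (m * p), ?_, ?_⟩
  · intro hd
    have h64 : p ∣ 2 ^ 6 := by
      have := Int.Prime.dvd_pow' hp hd
      exact_mod_cast this
    exact Stmt2Aux.ndvd2 hp h (hp.dvd_of_dvd_pow h64)
  · have hq := congrArg (Int.cast : ℤ → ℚ) ha
    push_cast at hq ⊢
    rw [← hq, sum_mul]
    refine sum_congr rfl fun k hk => ?_
    simp only [mem_range] at hk
    rw [← Stmt2Aux.rf_eq k, show (64 : ℚ) ^ (m * p) = 64 ^ k * 64 ^ (m * p - k) by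
      rw [← pow_add]; congr 1; omega]
    have : (64 : ℚ) ^ k = (4 ^ k) ^ 3 := by
      rw [← pow_mul, mul_comm, pow_mul]; norm_num
    rw [this, ← div_pow]
    ring
end

section
/- Let m and n be positive integers with n ≡ 3 (mod 4). Then the square of the n-th cyclotomic polynomial Φ_n(q)^2 divides, in the ring of polynomials (after clearing denominators, or equivalently in the localization of ℤ[q] at Φ_n(q)), the sum over k from 0 to mn-1 of (1+q^{4k+1})(q^2;q^4)_k^3 / ((1+q)(q^4;q^4)_k^3) · q^k. -/
open Polynomial Finset

/-- The variable `q` as an element of the field of rational functions `ℚ(q)`. -/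
noncomputable def Q : RatFunc ℚ := RatFunc.X

/-- The q-shifted factorial `(a;b)_k = (1-a)(1-ab)⋯(1-ab^{k-1})` in `ℚ(q)`. -/
noncomputable def qPoch (a b : RatFunc ℚ) (k : ℕ) : RatFunc ℚ :=
  ∏ i ∈ Finset.range k, (1 - a * b ^ i)

open IsDedekindDomain

theorem cyclo_not_dvd (n : ℕ) (hn : 0 < n) (f : ℚ[X])
    (hf : ∀ z : ℂ, IsPrimitiveRoot z n → aeval z f ≠ 0) : ¬ cyclotomic n ℚ ∣ f := by
  rintro ⟨g, rfl⟩
  have hz := Complex.isPrimitiveRoot_exp n hn.ne'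
  apply hf _ hz
  have : aeval (Complex.exp (2 * Real.pi * Complex.I / n)) (cyclotomic n ℚ) = 0 := by
    rw [aeval_def, eval₂_eq_eval_map, map_cyclotomic]
    exact hz.isRoot_cyclotomic hn
  rw [map_mul, this, zero_mul]

theorem exists_val (n : ℕ) (hn : 1 < n) : ∃ (v : Valuation (RatFunc ℚ) (WithZero (Multiplicative ℤ)))
    (δ : WithZero (Multiplicative ℤ)), v Q = 1 ∧ δ ≤ 1 ∧ δ ≠ 0 ∧
    (∀ e : ℤ, ¬ (n : ℤ) ∣ e → v (1 - Q ^ e) = 1) ∧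
    (∀ e : ℤ, (n : ℤ) ∣ e → e ≠ 0 → v (1 - Q ^ e) = δ) ∧
    ∀ f, v f ≤ δ ^ 2 → ∃ a b : ℚ[X], ¬ (cyclotomic n ℚ ∣ b) ∧ f * algebraMap ℚ[X] (RatFunc ℚ) b
      = algebraMap ℚ[X] (RatFunc ℚ) (cyclotomic n ℚ ^ 2 * a) := by
  have hn0 : 0 < n := by omega
  have hirr := cyclotomic.irreducible_rat hn0
  have hpr := hirr.prime
  have h0 := hpr.ne_zero
  let w : HeightOneSpectrum ℚ[X] := ⟨Ideal.span {cyclotomic n ℚ},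
    (Ideal.span_singleton_prime h0).2 hpr, by simpa using h0⟩
  have hmem : ∀ f : ℚ[X], f ∈ w.asIdeal ↔ cyclotomic n ℚ ∣ f := fun f => Ideal.mem_span_singleton
  have hunit : ∀ f : ℚ[X], ¬ cyclotomic n ℚ ∣ f → w.valuation (RatFunc ℚ) (algebraMap _ _ f) = 1 := by
    intro f hf
    rw [HeightOneSpectrum.valuation_eq_one_iff_notMem, hmem]
    exact hf
  set v := w.valuation (RatFunc ℚ) with hv
  have hQ : algebraMap ℚ[X] (RatFunc ℚ) X = Q := RatFunc.algebraMap_X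
  have vQ : v Q = 1 := by
    rw [← hQ]
    apply hunit
    apply cyclo_not_dvd n hn0
    intro z hz
    simpa using hz.ne_zero hn0.ne'
  have Q0 : Q ≠ 0 := by
    intro h
    rw [h] at vQ
    simp at vQ
  have hneg : ∀ e : ℤ, v (1 - Q ^ (-e)) = v (1 - Q ^ e) := by
    intro e
    have : 1 - Q ^ (-e) = - (Q ^ (-e) * (1 - Q ^ e)) := by
      rw [mul_sub, ← zpow_add₀ Q0]; simp
    rw [this, Valuation.map_neg, map_mul, map_zpow₀, vQ]; simp
  refine ⟨v, v (1 - Q ^ n), vQ, ?_, ?_, ?_, ?_, ?_⟩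
  · have : (1 - Q ^ n) = algebraMap ℚ[X] (RatFunc ℚ) (1 - X ^ n) := by simp [hQ]
    rw [this]
    exact w.valuation_le_one _
  · rw [Valuation.ne_zero_iff]
    have : (1 - Q ^ n) = algebraMap ℚ[X] (RatFunc ℚ) (1 - X ^ n) := by simp [hQ]
    rw [this]
    intro h
    rw [map_eq_zero_iff _ (IsFractionRing.injective _ _)] at h
    have := congrArg (eval 0) h
    simp [hn0.ne'] at this
  · have key : ∀ e : ℕ, ¬ n ∣ e → v (1 - Q ^ e) = 1 := by
      intro e he
      have : (1 - Q ^ e) = algebraMap ℚ[X] (RatFunc ℚ) (1 - X ^ e) := by simp [hQ]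
      rw [this]
      apply hunit
      apply cyclo_not_dvd n hn0
      intro z hz h
      apply he
      rw [← hz.pow_eq_one_iff_dvd]
      simp [sub_eq_zero] at h
      exact h.symm
    intro e he
    obtain ⟨k, rfl | rfl⟩ := e.eq_nat_or_neg
    · rw [zpow_natCast]; exact key k (by exact_mod_cast he)
    · rw [hneg, zpow_natCast]; exact key k (by rw [Int.dvd_neg] at he; exact_mod_cast he)
  · have key : ∀ e : ℕ, n ∣ e → e ≠ 0 → v (1 - Q ^ e) = v (1 - Q ^ n) := by
      rintro _ ⟨j, rfl⟩ hj
      have hj0 : j ≠ 0 := by rintro rfl; simp at hj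
      have : (1 - Q ^ (n * j)) = (1 - Q ^ n) * algebraMap ℚ[X] (RatFunc ℚ) (∑ i ∈ range j, (X ^ n) ^ i) := by
        simp only [map_sum, map_pow, hQ]
        rw [mul_neg_geom_sum, pow_mul]
      rw [this, map_mul, hunit, mul_one]
      apply cyclo_not_dvd n hn0
      intro z hz
      simp [hz.pow_eq_one, hj0]
    intro e he h0
    obtain ⟨k, rfl | rfl⟩ := e.eq_nat_or_neg
    · rw [zpow_natCast]; exact key k (by exact_mod_cast he) (by exact_mod_cast h0)
    · rw [hneg, zpow_natCast]; exact key k (by rw [Int.dvd_neg] at he; exact_mod_cast he) (by simpa using h0)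
  · intro f hf
    set C := algebraMap ℚ[X] (RatFunc ℚ) (cyclotomic n ℚ) with hC
    have hC0 : C ≠ 0 := by
      rw [hC, Ne, map_eq_zero_iff _ (IsFractionRing.injective _ _)]; exact h0
    have hle : v (1 - Q ^ n) ≤ v C := by
      obtain ⟨g, hg⟩ := cyclotomic.dvd_X_pow_sub_one n ℚ
      have : (1 - Q ^ n) = C * algebraMap ℚ[X] (RatFunc ℚ) (-g) := by
        rw [hC, ← map_mul, mul_neg, ← hg]; simp [hQ]
      rw [this, map_mul]
      exact mul_le_of_le_one_right' (w.valuation_le_one _)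
    have hg : v (f / C ^ 2) ≤ 1 := by
      rw [map_div₀, map_pow]
      apply div_le_one_of_le₀ _ zero_le
      exact hf.trans (pow_le_pow_left' hle 2)
    obtain ⟨a, b, h⟩ := HeightOneSpectrum.exists_primeCompl_mul_eq_of_integer (K := RatFunc ℚ) w _ hg
    refine ⟨a, b, ?_, ?_⟩
    · have := b.2
      rw [← hmem]
      exact this
    · rw [map_mul, map_pow, ← hC]
      field_simp at h
      linear_combination h


noncomputable def sixW {K : Type*} [Field K] (p a c d : K) (N k : ℕ) : K :=
  ∏ i ∈ range k, ((1 - a * p ^ i) * (1 - c * p ^ i) * (1 - d * p ^ i) * (1 - p ^ i / p ^ N) *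
    (a * p ^ (N + 1) / (c * d)) /
    ((1 - p ^ (i + 1)) * (1 - a * p ^ (i + 1) / c) * (1 - a * p ^ (i + 1) / d) *
      (1 - a * p ^ (N + 1 + i))))

theorem sixW_succ {K : Type*} [Field K] (p a c d : K) (N k : ℕ) :
    sixW p a c d N (k + 1) = sixW p a c d N k *
    ((1 - a * p ^ k) * (1 - c * p ^ k) * (1 - d * p ^ k) * (1 - p ^ k / p ^ N) *
    (a * p ^ (N + 1) / (c * d)) /
    ((1 - p ^ (k + 1)) * (1 - a * p ^ (k + 1) / c) * (1 - a * p ^ (k + 1) / d) *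
      (1 - a * p ^ (N + 1 + k)))) := prod_range_succ _ _

section
variable {K : Type*} [Field K] {p a c d : K} (hp : p ≠ 0) (hc : c ≠ 0) (hd : d ≠ 0)
  (h1 : ∀ j, 1 - p ^ (j + 1) ≠ 0) (h2 : ∀ j, 1 - a * p ^ j ≠ 0)
  (h3 : ∀ j, 1 - a * p ^ (j + 1) / c ≠ 0) (h4 : ∀ j, 1 - a * p ^ (j + 1) / d ≠ 0)
include hp hc hd h1 h2 h3 h4

theorem sixW_shift (N k : ℕ) : sixW p a c d N k * ((1 - 1 / p ^ (N + 1)) * (1 - a * p ^ (N + 1)) * p ^ k)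
    = sixW p a c d (N + 1) k * ((1 - p ^ k / p ^ (N + 1)) * (1 - a * p ^ (N + 1 + k))) := by
  induction k with
  | zero => simp [sixW]
  | succ k ih =>
    have e : ∀ M, sixW p a c d M (k + 1) = sixW p a c d M k * ((1 - a * p ^ k) * (1 - c * p ^ k) * (1 - d * p ^ k) * (1 - p ^ k / p ^ M) *
    (a * p ^ (M + 1) / (c * d)) /
    ((1 - p ^ (k + 1)) * (1 - a * p ^ (k + 1) / c) * (1 - a * p ^ (k + 1) / d) *
      (1 - a * p ^ (M + 1 + k)))) := fun M => by rw [sixW, prod_range_succ]; rfl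
    rw [e, e]
    have g2 := h2 (N + 1 + k)
    have g2' := h2 (N + 1 + 1 + k)
    have g1 := h1 k
    have g3 := h3 k
    have g4 := h4 k
    have hM : p ^ N ≠ 0 := pow_ne_zero _ hp
    have e2 : N + 1 + (k + 1) = N + 1 + 1 + k := by ring
    rw [e2]
    set D1 := 1 - p ^ (k + 1) 
    set D3 := 1 - a * p ^ (k + 1) / c
    set D4 := 1 - a * p ^ (k + 1) / d
    have key : sixW p a c d N k * ((1 - a * p ^ k) * (1 - c * p ^ k) * (1 - d * p ^ k) * (1 - p ^ k / p ^ N) *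
        (a * p ^ (N + 1) / (c * d)) / (D1 * D3 * D4 * (1 - a * p ^ (N + 1 + k)))) *
        ((1 - 1 / p ^ (N + 1)) * (1 - a * p ^ (N + 1)) * p ^ (k + 1)) =
      (sixW p a c d N k * ((1 - 1 / p ^ (N + 1)) * (1 - a * p ^ (N + 1)) * p ^ k)) * ((1 - a * p ^ k) * (1 - c * p ^ k) * (1 - d * p ^ k) * (1 - p ^ k / p ^ N) *
        (a * p ^ (N + 1 + 1) / (c * d)) / (D1 * D3 * D4 * (1 - a * p ^ (N + 1 + k)))) := by ring
    rw [key, ih]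
    have e3 : p ^ (k + 1) / p ^ (N + 1) = p ^ k / p ^ N := by
      rw [pow_succ, pow_succ, mul_div_mul_right _ _ hp]
    rw [e3]
    field_simp

theorem sixF_tel (N k : ℕ) :
    ∑ i ∈ range k, (1 - a * p ^ (2 * i)) * (sixW p a c d (N + 1) i -
      ((1 - a * p ^ (N + 1)) * (1 - a * p ^ (N + 1) / (c * d)) /
        ((1 - a * p ^ (N + 1) / c) * (1 - a * p ^ (N + 1) / d))) * sixW p a c d N i)
    = sixW p a c d (N + 1) k * ((1 - p ^ k) * (1 - a * p ^ k / c) * (1 - a * p ^ k / d) *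
        (1 - a * p ^ (N + 1 + k)) / (p ^ k * (1 - 1 / p ^ (N + 1)) * (1 - a * p ^ (N + 1) / c) *
          (1 - a * p ^ (N + 1) / d))) := by
  have g5 : (1 - 1 / p ^ (N + 1)) ≠ 0 := by
    intro h
    apply h1 N
    have : p ^ (N+1) ≠ 0 := pow_ne_zero _ hp
    field_simp at h
    linear_combination -h
  induction k with
  | zero => simp
  | succ k ih =>
    rw [sum_range_succ, ih]
    have hs := sixW_shift hp hc hd h1 h2 h3 h4 N k
    have hk : p ^ k ≠ 0 := pow_ne_zero _ hp
    have hM : p ^ N ≠ 0 := pow_ne_zero _ hp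
    have hs' : sixW p a c d N k = sixW p a c d (N + 1) k * ((1 - p ^ k / p ^ (N + 1)) * (1 - a * p ^ (N + 1 + k))) / ((1 - 1 / p ^ (N + 1)) * (1 - a * p ^ (N + 1)) * p ^ k) := by
      rw [eq_div_iff, hs]
      exact mul_ne_zero (mul_ne_zero g5 (h2 _)) hk
    have e : sixW p a c d (N + 1) (k + 1) = sixW p a c d (N + 1) k * ((1 - a * p ^ k) * (1 - c * p ^ k) * (1 - d * p ^ k) * (1 - p ^ k / p ^ (N + 1)) *
    (a * p ^ (N + 1 + 1) / (c * d)) /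
    ((1 - p ^ (k + 1)) * (1 - a * p ^ (k + 1) / c) * (1 - a * p ^ (k + 1) / d) *
      (1 - a * p ^ (N + 1 + 1 + k)))) := by rw [sixW, prod_range_succ]; rfl
    rw [e, hs']
    generalize sixW p a c d (N + 1) k = W
    have g2 := h2 (N + 1)
    have g2' := h2 (N + 1 + 1 + k)
    have g1 := h1 k
    have g3 := h3 k
    have g4 := h4 k
    have g3' := h3 N
    have g4' := h4 N
    have e1 : W * ((1 - a * p ^ k) * (1 - c * p ^ k) * (1 - d * p ^ k) * (1 - p ^ k / p ^ (N + 1)) *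
      (a * p ^ (N + 1 + 1) / (c * d)) / ((1 - p ^ (k + 1)) * (1 - a * p ^ (k + 1) / c) * (1 - a * p ^ (k + 1) / d) *
      (1 - a * p ^ (N + 1 + 1 + k)))) * ((1 - p ^ (k+1)) * (1 - a * p ^ (k+1) / c) * (1 - a * p ^ (k+1) / d) *
        (1 - a * p ^ (N + 1 + (k+1))) / (p ^ (k+1) * (1 - 1 / p ^ (N + 1)) * (1 - a * p ^ (N + 1) / c) *
          (1 - a * p ^ (N + 1) / d))) = W * ((1 - a * p ^ k) * (1 - c * p ^ k) * (1 - d * p ^ k) * (1 - p ^ k / p ^ (N + 1)) *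
      (a * p ^ (N + 1 + 1) / (c * d))) / (p ^ (k+1) * (1 - 1 / p ^ (N + 1)) * (1 - a * p ^ (N + 1) / c) *
          (1 - a * p ^ (N + 1) / d)) := by
      have e2 : N + 1 + (k + 1) = N + 1 + 1 + k := by ring
      rw [e2]
      generalize (1 - a * p ^ (N + 1 + 1 + k)) = X1 at *
      generalize 1 - p ^ (k + 1) = X2 at *
      generalize (1 - a * p ^ (k + 1) / c) = X3 at *
      generalize (1 - a * p ^ (k + 1) / d) = X4 at *
      generalize (1 - a * p ^ (N + 1) / c) = X5 at *
      generalize (1 - a * p ^ (N + 1) / d) = X6 at *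
      generalize (1 - 1 / p ^ (N + 1)) = X7 at *
      field_simp
    rw [e1]
    have e3 : (1 - a * p ^ (2 * k)) * (W - (1 - a * p ^ (N + 1)) * (1 - a * p ^ (N + 1) / (c * d)) /
        ((1 - a * p ^ (N + 1) / c) * (1 - a * p ^ (N + 1) / d)) *
          (W * ((1 - p ^ k / p ^ (N + 1)) * (1 - a * p ^ (N + 1 + k))) /
            ((1 - 1 / p ^ (N + 1)) * (1 - a * p ^ (N + 1)) * p ^ k))) =
      (1 - a * p ^ (2 * k)) * W * (p ^ k * (1 - 1 / p ^ (N + 1)) * (1 - a * p ^ (N + 1) / c) *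
          (1 - a * p ^ (N + 1) / d) - (1 - a * p ^ (N + 1) / (c * d)) * ((1 - p ^ k / p ^ (N + 1)) * (1 - a * p ^ (N + 1 + k)))) / (p ^ k * (1 - 1 / p ^ (N + 1)) * (1 - a * p ^ (N + 1) / c) *
          (1 - a * p ^ (N + 1) / d)) := by
      generalize (1 - a * p ^ (N + 1) / c) = X5 at *
      generalize (1 - a * p ^ (N + 1) / d) = X6 at *
      generalize (1 - 1 / p ^ (N + 1)) = X7 at *
      generalize 1 - a * p ^ (N + 1) = X8 at *
      field_simp
    have e4 : W * ((1 - p ^ k) * (1 - a * p ^ k / c) * (1 - a * p ^ k / d) *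
        (1 - a * p ^ (N + 1 + k)) / (p ^ k * (1 - 1 / p ^ (N + 1)) * (1 - a * p ^ (N + 1) / c) *
          (1 - a * p ^ (N + 1) / d))) = W * ((1 - p ^ k) * (1 - a * p ^ k / c) * (1 - a * p ^ k / d) *
        (1 - a * p ^ (N + 1 + k))) / (p ^ k * (1 - 1 / p ^ (N + 1)) * (1 - a * p ^ (N + 1) / c) *
          (1 - a * p ^ (N + 1) / d)) := by ring
    rw [e3, e4, ← add_div]
    have e5 : ∀ A B : K, A / (p ^ (k+1) * (1 - 1 / p ^ (N + 1)) * (1 - a * p ^ (N + 1) / c) *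
          (1 - a * p ^ (N + 1) / d)) = (A / p) / (p ^ k * (1 - 1 / p ^ (N + 1)) * (1 - a * p ^ (N + 1) / c) *
          (1 - a * p ^ (N + 1) / d)) := by
      intro A B
      rw [div_div]; congr 1; ring
    rw [e5 _ 0]
    congr 1
    field_simp
    ring

theorem sixF_sum (N k : ℕ) (hk : N < k) :
    ∑ i ∈ range k, (1 - a * p ^ (2 * i)) * sixW p a c d N i =
      (1 - a) * ∏ j ∈ range N, ((1 - a * p ^ (j + 1)) * (1 - a * p ^ (j + 1) / (c * d)) /
        ((1 - a * p ^ (j + 1) / c) * (1 - a * p ^ (j + 1) / d))) := by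
  induction N with
  | zero =>
    rw [sum_eq_single_of_mem 0 (by simpa using hk)]
    · simp [sixW]
    · intro b _ hb
      rw [sixW, prod_eq_zero (i := 0)]
      · simp
      · simpa using Nat.pos_of_ne_zero hb
      · simp
  | succ N ih =>
    have := sixF_tel hp hc hd h1 h2 h3 h4 N k
    have hz : sixW p a c d (N + 1) k = 0 := by
      rw [sixW, prod_eq_zero (i := N + 1)]
      · simpa using hk
      · have : p ^ (N + 1) ≠ 0 := pow_ne_zero _ hp
        simp [this]
    rw [hz, zero_mul] at this
    simp only [mul_sub, sum_sub_distrib] at this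
    rw [sub_eq_zero] at this
    rw [this, prod_range_succ, ← mul_assoc, ← ih (by omega), sum_mul]
    refine sum_congr rfl fun i _ => by ring
end

section
variable {K : Type*} [Field K] {Γ : Type*} [LinearOrderedCommGroupWithZero Γ] (v : Valuation K Γ)

theorem cong_div {a a' b b' : K} {ε : Γ} (ha' : v a' ≤ 1) (hb : v b = 1)
    (hb' : v b' = 1) (h : v (a - a') ≤ ε) (h' : v (b - b') ≤ ε) : v (a / b - a' / b') ≤ ε := by
  have b0 : b ≠ 0 := by rintro rfl; simp at hb
  have b0' : b' ≠ 0 := by rintro rfl; simp at hb'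
  have : a / b - a' / b' = ((a - a') * b' - a' * (b - b')) / (b * b') := by
    field_simp; ring
  rw [this, map_div₀, map_mul, hb, hb', mul_one, div_one]
  apply v.map_sub_le
  · rw [map_mul, hb', mul_one]; exact h
  · rw [map_mul]; exact (mul_le_of_le_one_left' ha').trans h'

theorem val_prod_le_one (f : ℕ → K) (k : ℕ) (hf : ∀ i < k, v (f i) ≤ 1) :
    v (∏ i ∈ range k, f i) ≤ 1 := by
  rw [map_prod]
  exact prod_le_one' fun i hi => hf i (mem_range.1 hi)

theorem val_prod_eq_one (f : ℕ → K) (k : ℕ) (hf : ∀ i < k, v (f i) = 1) :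
    v (∏ i ∈ range k, f i) = 1 := by
  rw [map_prod]
  exact prod_eq_one fun i hi => hf i (mem_range.1 hi)

theorem val_prod_le (f : ℕ → K) (k : ℕ) (ε : Γ) (hf : ∀ i < k, v (f i) ≤ 1) (j : ℕ) (hj : j < k)
    (h : v (f j) ≤ ε) :
    v (∏ i ∈ range k, f i) ≤ ε := by
  rw [← mul_prod_erase _ _ (mem_range.2 hj), map_mul, map_prod]
  refine (mul_le_of_le_one_right' ?_).trans h
  exact prod_le_one' fun i hi => hf i (mem_range.1 (mem_of_mem_erase hi))

theorem cong_prod (f g : ℕ → K) (k : ℕ) (ε : Γ) (hf : ∀ i < k, v (f i) ≤ 1)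
    (hg : ∀ i < k, v (g i) ≤ 1) (h : ∀ i < k, v (f i - g i) ≤ ε) :
    v (∏ i ∈ range k, f i - ∏ i ∈ range k, g i) ≤ ε := by
  induction k with
  | zero => simp
  | succ k ih =>
    have ih' := ih (fun i hi => hf i (by omega)) (fun i hi => hg i (by omega))
      (fun i hi => h i (by omega))
    rw [prod_range_succ, prod_range_succ]
    have : (∏ x ∈ range k, f x) * f k - (∏ x ∈ range k, g x) * g k =
      (∏ x ∈ range k, f x - ∏ x ∈ range k, g x) * f k + (∏ x ∈ range k, g x) * (f k - g k) := by ring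
    rw [this]
    apply v.map_add_le
    · rw [map_mul]; exact (mul_le_of_le_one_right' (hf k (by omega))).trans ih'
    · rw [map_mul]
      exact (mul_le_of_le_one_left' (val_prod_le_one v g k fun i hi => hg i (by omega))).trans
        (h k (by omega))

theorem cong_cubic {y X Z : K} {δ : Γ} (hy : v y = 1) (hX : v X = 1) (hZ : v Z = 1)
    (h1 : v (1 - X) ≤ δ) (h2 : v (1 - Z) ≤ δ) :
    v ((1 - y * X) * (1 - y / (X * Z)) * (1 - y * Z) - (1 - y) ^ 3) ≤ δ ^ 2 := by
  have X0 : X ≠ 0 := by rintro rfl; simp at hX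
  have Z0 : Z ≠ 0 := by rintro rfl; simp at hZ
  have : (1 - y * X) * (1 - y / (X * Z)) * (1 - y * Z) - (1 - y) ^ 3 =
    ((1 - X) * (1 - X)) * (y ^ 2 / X - y / X) + ((1 - Z) * (1 - Z)) * (y ^ 2 / Z - y / Z) +
      ((1 - X) * (1 - Z)) * (y ^ 2 - y / (X * Z)) := by
    field_simp; ring
  rw [this, sq δ]
  refine v.map_add_le (v.map_add_le ?_ ?_) ?_ <;> rw [map_mul, map_mul]
  · refine (mul_le_of_le_one_right' (v.map_sub_le ?_ ?_)).trans (mul_le_mul' h1 h1) <;> simp [hy, hX]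
  · refine (mul_le_of_le_one_right' (v.map_sub_le ?_ ?_)).trans (mul_le_mul' h2 h2) <;> simp [hy, hZ]
  · refine (mul_le_of_le_one_right' (v.map_sub_le ?_ ?_)).trans (mul_le_mul' h1 h2) <;> simp [hy, hX, hZ]
end

section
variable {n : ℕ} {v : Valuation (RatFunc ℚ) (WithZero (Multiplicative ℤ))}
    {δ : WithZero (Multiplicative ℤ)} (h : n % 4 = 3) (vQ : v Q = 1) (δ1 : δ ≤ 1) (δ0 : δ ≠ 0)
    (hu : ∀ e : ℤ, ¬ (n : ℤ) ∣ e → v (1 - Q ^ e) = 1)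
    (hd : ∀ e : ℤ, (n : ℤ) ∣ e → e ≠ 0 → v (1 - Q ^ e) = δ)

include vQ in
theorem Q_ne : Q ≠ 0 := by
  intro h
  rw [h] at vQ
  simp at vQ

include vQ in
theorem vQz (e : ℤ) : v (Q ^ e) = 1 := by rw [map_zpow₀, vQ, one_zpow]

include hd in
theorem hd' (e : ℤ) (he : (n : ℤ) ∣ e) : v (1 - Q ^ e) ≤ δ := by
  by_cases h0 : e = 0
  · simp [h0]
  · exact (hd e he h0).le

include vQ in
theorem h1' (e : ℤ) : v (1 - Q ^ e) ≤ 1 := v.map_sub_le (by simp) (vQz vQ e).le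

include vQ in
theorem h1p (e : ℤ) : v (1 + Q ^ e) ≤ 1 := v.map_add_le (by simp) (vQz vQ e).le

include h in
theorem not_dvd_aux (i : ℕ) (hi : i + 1 < n) (c : ℤ) : ¬ (n : ℤ) ∣ n * c + 4 * (i + 1) := by
  rw [Int.dvd_add_right (Dvd.intro _ rfl)]
  intro hh
  have : n ∣ 4 * (i + 1) := by exact_mod_cast hh
  have h4 : Nat.Coprime n 4 := by
    rw [Nat.Coprime, Nat.gcd_comm, Nat.gcd_rec, h]
    rfl
  have := Nat.le_of_dvd (by omega) (h4.dvd_of_dvd_mul_left this)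
  omega

/-- the ratio of the given series, shifted -/
noncomputable def rt (L : ℤ) (i : ℕ) : RatFunc ℚ :=
  (1 - Q ^ (L + 2 + 4 * i)) ^ 3 / (1 - Q ^ (L + 4 + 4 * i)) ^ 3

/-- the ratio of the deformed series -/
noncomputable def rs (n : ℕ) (L : ℤ) (i : ℕ) : RatFunc ℚ :=
  ((1 - Q ^ (2 * L + 2 + 4 * i)) * (1 - Q ^ (2 - 2 * n + 4 * i : ℤ)) *
    (1 - Q ^ (L + 2 + 2 * n + 4 * i))) /
  ((1 - Q ^ (4 + 4 * i : ℤ)) * (1 - Q ^ (2 * L + 4 + 2 * n + 4 * i)) *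
    (1 - Q ^ (L + 4 - 2 * n + 4 * i)))

include vQ hd in
theorem cong_Q (e A B : ℤ) (hA : (n : ℤ) ∣ A) (hB : (n : ℤ) ∣ B) :
    v ((1 - Q ^ (e + A)) * (1 - Q ^ (e - (A + B))) * (1 - Q ^ (e + B)) - (1 - Q ^ e) ^ 3)
      ≤ δ ^ 2 := by
  have := cong_cubic v (vQz vQ e) (vQz vQ A) (vQz vQ B) (hd' hd A hA) (hd' hd B hB)
  have Q0 := Q_ne vQ
  rwa [← zpow_add₀ Q0, ← zpow_add₀ Q0, ← zpow_add₀ Q0, ← zpow_sub₀ Q0] at this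

include h vQ hd hu in
theorem cong_ratio (l i : ℕ) (hi : i + 1 < n) :
    v (rt (4 * l * n) i) ≤ 1 ∧ v (rs n (4 * l * n) i) ≤ 1 ∧
      v (rt (4 * l * n) i - rs n (4 * l * n) i) ≤ δ ^ 2 := by
  have d1 : v (1 - Q ^ (4 * l * n + 4 + 4 * i : ℤ)) = 1 := by
    apply hu
    convert not_dvd_aux h i hi (4 * l) using 1; ring
  have d2 : v (1 - Q ^ (4 + 4 * i : ℤ)) = 1 := by
    apply hu
    convert not_dvd_aux h i hi 0 using 1; ring
  have d3 : v (1 - Q ^ (2 * (4 * l * n) + 4 + 2 * n + 4 * i : ℤ)) = 1 := by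
    apply hu
    convert not_dvd_aux h i hi (8 * l + 2) using 1; ring
  have d4 : v (1 - Q ^ (4 * l * n + 4 - 2 * n + 4 * i : ℤ)) = 1 := by
    apply hu
    convert not_dvd_aux h i hi (4 * l - 2) using 1; ring
  have hA : (n : ℤ) ∣ 4 * l * n := Dvd.intro_left _ rfl
  have hB : (n : ℤ) ∣ 2 * n := Dvd.intro_left _ rfl
  have n2 : v ((1 - Q ^ (2 * (4 * l * n) + 2 + 4 * i : ℤ)) * (1 - Q ^ (2 - 2 * n + 4 * i : ℤ)) *
    (1 - Q ^ (4 * l * n + 2 + 2 * n + 4 * i : ℤ))) ≤ 1 := by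
    rw [map_mul, map_mul]
    exact mul_le_one' (mul_le_one' (h1' vQ _) (h1' vQ _)) (h1' vQ _)
  refine ⟨?_, ?_, ?_⟩
  · rw [rt, map_div₀, map_pow, map_pow, d1, one_pow, div_one]
    exact pow_le_one' (h1' vQ _) 3
  · rw [rs, map_div₀, map_mul _ _ (1 - Q ^ (4 * l * n + 4 - 2 * n + 4 * i : ℤ)), map_mul _ (1 - Q ^ (4 + 4 * i : ℤ)), d2, d3, d4, mul_one, mul_one, div_one]
    exact n2
  · rw [rt, rs]
    apply cong_div v n2
    · rw [map_pow, d1, one_pow]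
    · rw [map_mul, map_mul, d2, d3, d4, mul_one, mul_one]
    · rw [Valuation.map_sub_swap]
      have := cong_Q vQ hd (4 * l * n + 2 + 4 * i : ℤ) _ _ hA hB
      rwa [show (4 * l * n + 2 + 4 * i + 4 * l * n : ℤ) = 2 * (4 * l * n) + 2 + 4 * i by ring,
        show (4 * l * n + 2 + 4 * i - (4 * l * n + 2 * n) : ℤ) = 2 - 2 * n + 4 * i by ring,
        show (4 * l * n + 2 + 4 * i + 2 * n : ℤ) = 4 * l * n + 2 + 2 * n + 4 * i by ring] at this
    · rw [Valuation.map_sub_swap]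
      have := cong_Q vQ hd (4 * l * n + 4 + 4 * i : ℤ) _ _ (Int.dvd_neg.2 hA) (Int.dvd_neg.2 hB)
      rwa [show (4 * l * n + 4 + 4 * i + -(4 * l * n) : ℤ) = 4 + 4 * i by ring,
        show (4 * l * n + 4 + 4 * i - (-(4 * l * n) + -(2 * n)) : ℤ) =
          2 * (4 * l * n) + 4 + 2 * n + 4 * i by ring,
        show (4 * l * n + 4 + 4 * i + -(2 * n) : ℤ) = 4 * l * n + 4 - 2 * n + 4 * i by ring] at this

theorem one_sub_Q_ne (e : ℤ) (he : e ≠ 0) (hn : 0 < n) (δ0 : δ ≠ 0)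
    (hu : ∀ e : ℤ, ¬ (n : ℤ) ∣ e → v (1 - Q ^ e) = 1)
    (hd : ∀ e : ℤ, (n : ℤ) ∣ e → e ≠ 0 → v (1 - Q ^ e) = δ) : 1 - Q ^ e ≠ 0 := by
  intro hh
  by_cases hne : (n : ℤ) ∣ e
  · have := hd e hne he
    rw [hh] at this
    simp at this
    exact δ0 this.symm
  · have := hu e hne
    rw [hh] at this
    simp at this

include h vQ hd hu δ0 δ1 in
theorem sum_s (l : ℕ) : v (∑ r ∈ range n, (1 + Q ^ (4 * l * n + 4 * r + 1 : ℤ)) * Q ^ r *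
      ∏ i ∈ range r, rs n (4 * l * n) i) ≤ δ ^ 2 := by
  have Q0 := Q_ne vQ
  obtain ⟨t, ht⟩ : ∃ t, n = 4 * t + 3 := ⟨n / 4, by omega⟩
  have hn : 0 < n := by omega
  have hL : (0 : ℤ) ≤ 4 * l * n := by positivity
  obtain ⟨L, hLd⟩ : ∃ L : ℤ, L = 4 * l * n := ⟨_, rfl⟩
  have hL4 : ∃ s : ℤ, L = 4 * s := ⟨l * n, by rw [hLd]; ring⟩
  have hLn : ∃ s : ℤ, L = n * s := ⟨4 * l, by rw [hLd]; ring⟩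
  rw [← hLd] at *
  have nz : ∀ e : ℤ, e ≠ 0 → 1 - Q ^ e ≠ 0 := fun e he => one_sub_Q_ne e he hn δ0 hu hd
  have q1 : ∀ i : ℕ, (Q ^ (4 : ℤ)) ^ i = Q ^ (4 * i : ℤ) := fun i => by
    rw [← zpow_natCast, ← zpow_mul]
  have q2 : ∀ i : ℕ, Q ^ (2 * L + 2) * (Q ^ (4 : ℤ)) ^ i = Q ^ (2 * L + 2 + 4 * i) := fun i => by
    rw [q1, ← zpow_add₀ Q0]
  have q3 : ∀ i : ℕ, Q ^ (2 * L + 2) * (Q ^ (4 : ℤ)) ^ (i + 1) / Q ^ (L + 2 * n + 2)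
      = Q ^ (L + 4 - 2 * n + 4 * i) := fun i => by
    rw [q2, ← zpow_sub₀ Q0]; congr 1; push_cast; ring
  have q4 : ∀ i : ℕ, Q ^ (2 * L + 2) * (Q ^ (4 : ℤ)) ^ (i + 1) / Q ^ (L + 1)
      = Q ^ (L + 5 + 4 * i) := fun i => by
    rw [q2, ← zpow_sub₀ Q0]; congr 1; push_cast; ring
  have q5 : ∀ i : ℕ, Q ^ (2 * L + 2) * (Q ^ (4 : ℤ)) ^ (i + 1) / (Q ^ (L + 2 * n + 2) * Q ^ (L + 1))
      = Q ^ (3 - 2 * n + 4 * i : ℤ) := fun i => by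
    rw [q2, ← zpow_add₀ Q0, ← zpow_sub₀ Q0]; congr 1; push_cast; ring
  have q6 : ∀ i : ℕ, Q ^ (L + 2 * n + 2) * (Q ^ (4 : ℤ)) ^ i = Q ^ (L + 2 + 2 * n + 4 * i) :=
    fun i => by
    rw [q1, ← zpow_add₀ Q0]; congr 1; ring
  have q7 : ∀ i : ℕ, Q ^ (L + 1) * (Q ^ (4 : ℤ)) ^ i = Q ^ (L + 1 + 4 * i) :=
    fun i => by
    rw [q1, ← zpow_add₀ Q0]
  have q8 : ∀ i : ℕ, (Q ^ (4 : ℤ)) ^ i / (Q ^ (4 : ℤ)) ^ (2 * t + 1) = Q ^ (2 - 2 * n + 4 * i : ℤ) :=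
    fun i => by
    rw [q1, q1, ← zpow_sub₀ Q0]; congr 1; rw [ht]; push_cast; ring
  have H := sixF_sum (p := Q ^ (4 : ℤ)) (a := Q ^ (2 * L + 2)) (c := Q ^ (L + 2 * n + 2))
    (d := Q ^ (L + 1)) (zpow_ne_zero _ Q0) (zpow_ne_zero _ Q0) (zpow_ne_zero _ Q0)
    (fun j => by rw [q1]; exact nz _ (by push_cast; omega))
    (fun j => by rw [q2]; exact nz _ (by omega))
    (fun j => by rw [q3]; exact nz _ (by omega))
    (fun j => by rw [q4]; exact nz _ (by omega)) (2 * t + 1) n (by omega)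
  have hW : ∀ r : ℕ, sixW (Q ^ (4 : ℤ)) (Q ^ (2 * L + 2)) (Q ^ (L + 2 * n + 2)) (Q ^ (L + 1))
      (2 * t + 1) r * (1 - Q ^ (L + 1 + 4 * r)) =
      (1 - Q ^ (L + 1)) * (Q ^ r * ∏ i ∈ range r, rs n L i) := by
    intro r
    induction r with
    | zero => simp [sixW]
    | succ r ih =>
      have e1 : sixW (Q ^ (4 : ℤ)) (Q ^ (2 * L + 2)) (Q ^ (L + 2 * n + 2)) (Q ^ (L + 1))
        (2 * t + 1) (r + 1) = sixW (Q ^ (4 : ℤ)) (Q ^ (2 * L + 2)) (Q ^ (L + 2 * n + 2)) (Q ^ (L + 1))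
        (2 * t + 1) r * ((1 - Q ^ (2 * L + 2 + 4 * r)) * (1 - Q ^ (L + 2 + 2 * n + 4 * r)) *
          (1 - Q ^ (L + 1 + 4 * r)) * (1 - Q ^ (2 - 2 * n + 4 * r : ℤ)) * Q /
          ((1 - Q ^ (4 + 4 * r : ℤ)) * (1 - Q ^ (L + 4 - 2 * n + 4 * r)) * (1 - Q ^ (L + 5 + 4 * r))
            * (1 - Q ^ (2 * L + 4 + 2 * n + 4 * r)))) := by
        rw [sixW_succ, q8, q6, q7, q3, q4, q5, q2, q2, q1]
        have f1 : (3 - 2 * n + 4 * ((2 * t + 1 : ℕ) : ℤ) : ℤ) = 1 := by rw [ht]; push_cast; ring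
        have f2 : (4 * ((r + 1 : ℕ) : ℤ)) = 4 + 4 * r := by push_cast; ring
        have f3 : (2 * L + 2 + 4 * ((2 * t + 1 + 1 + r : ℕ) : ℤ)) = 2 * L + 4 + 2 * n + 4 * r := by
          rw [ht]; push_cast; ring
        rw [f1, f2, f3, zpow_one]
      have e2 : (L + 1 + 4 * ((r + 1 : ℕ) : ℤ)) = L + 5 + 4 * r := by push_cast; ring
      rw [e1, e2, prod_range_succ, pow_succ]
      have n5 := nz (L + 5 + 4 * r) (by omega)
      have : ∀ W A B C D E F G I J : RatFunc ℚ, I ≠ 0 → W * (A * B * C * D * E / (F * G * I * J)) * I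
          = (W * C) * (E * (A * D * B / (F * J * G))) := by
        intro W A B C D E F G I J hI
        have : W * (A * B * C * D * E / (F * G * I * J)) * I = W * (A * B * C * D * E / (F * G * J)) * (I / I) := by ring
        rw [this, div_self hI]; ring
      rw [this _ _ _ _ _ _ _ _ _ _ n5, ih, rs]
      ring
  have hS : (1 - Q ^ (L + 1)) * (∑ r ∈ range n, (1 + Q ^ (L + 4 * r + 1 : ℤ)) * Q ^ r *
      ∏ i ∈ range r, rs n L i) = ∑ i ∈ range n, (1 - Q ^ (2 * L + 2) * (Q ^ (4 : ℤ)) ^ (2 * i)) *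
      sixW (Q ^ (4 : ℤ)) (Q ^ (2 * L + 2)) (Q ^ (L + 2 * n + 2)) (Q ^ (L + 1)) (2 * t + 1) i := by
    rw [mul_sum]
    refine sum_congr rfl fun r _ => ?_
    have e1 : Q ^ (2 * L + 2) * (Q ^ (4 : ℤ)) ^ (2 * r) = Q ^ (L + 1 + 4 * r) * Q ^ (L + 1 + 4 * r) := by
      rw [q2, ← zpow_add₀ Q0]; congr 1; push_cast; ring
    have e2 : L + 4 * r + 1 = L + 1 + 4 * r := by ring
    rw [e1, e2]
    linear_combination (-(1 + Q ^ (L + 1 + 4 * r))) * hW r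
  rw [H] at hS
  obtain ⟨s, hs⟩ := hLn
  have u1 : v (1 - Q ^ (L + 1)) = 1 := by
    apply hu
    rw [hs, Int.dvd_add_right (Dvd.intro _ rfl)]
    intro h1
    have := Int.le_of_dvd (by norm_num) h1
    omega
  have hS' := congrArg v hS
  rw [map_mul, u1, one_mul] at hS'
  rw [hS', map_mul]
  refine (mul_le_of_le_one_left' (h1' vQ _)).trans ?_
  simp only [q3, q4, q5]
  simp only [q2]
  rw [prod_div_distrib, prod_mul_distrib, prod_mul_distrib, map_div₀, map_mul, map_mul,
    val_prod_eq_one v (fun j : ℕ => 1 - Q ^ (L + 4 - 2 * n + 4 * j)),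
    val_prod_eq_one v (fun j : ℕ => 1 - Q ^ (L + 5 + 4 * j)), mul_one, div_one, sq]
  · refine mul_le_mul' ?_ ?_
    · apply val_prod_le v _ _ _ (fun i _ => h1' vQ _) (2 * t) (by omega)
      apply hd' hd
      refine ⟨2 * s + 2, ?_⟩
      rw [hs, ht]; push_cast; ring
    · apply val_prod_le v _ _ _ (fun i _ => h1' vQ _) t (by omega)
      apply hd' hd
      refine ⟨-1, ?_⟩
      rw [ht]; push_cast; ring
  · intro j hj
    apply hu
    have : L + 5 + 4 * j = n * s + (5 + 4 * j) := by rw [hs]; ring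
    rw [this, Int.dvd_add_right (Dvd.intro _ rfl)]
    rintro ⟨k, hk⟩
    have k1 : 0 < k := by
      by_contra hh
      have : (n : ℤ) * k ≤ 0 := mul_nonpos_of_nonneg_of_nonpos (by omega) (by omega)
      omega
    have k2 : k < 2 := by
      by_contra hh
      have : (n : ℤ) * 2 ≤ n * k := mul_le_mul_of_nonneg_left (by omega) (by omega)
      omega
    obtain rfl : k = 1 := by omega
    omega
  · intro j hj
    apply hu
    convert not_dvd_aux h j (by omega) (s - 2) using 1
    rw [hs]; ring

include h vQ hd hu δ0 δ1 in
theorem sum_t (l : ℕ) : v (∑ r ∈ range n, (1 + Q ^ (4 * l * n + 4 * r + 1 : ℤ)) * Q ^ r *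
      ∏ i ∈ range r, rt (4 * l * n) i) ≤ δ ^ 2 := by
  have e := sub_add_cancel (∑ r ∈ range n, (1 + Q ^ (4 * l * n + 4 * r + 1 : ℤ)) * Q ^ r *
      ∏ i ∈ range r, rt (4 * l * n) i) (∑ r ∈ range n, (1 + Q ^ (4 * l * n + 4 * r + 1 : ℤ)) * Q ^ r *
      ∏ i ∈ range r, rs n (4 * l * n) i)
  rw [← e]
  refine v.map_add_le ?_ (sum_s h vQ δ1 δ0 hu hd l)
  rw [← sum_sub_distrib]
  apply v.map_sum_le
  intro r hr
  have hr := mem_range.1 hr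
  rw [← mul_sub, map_mul, map_mul, map_pow, vQ, one_pow, mul_one]
  refine (mul_le_of_le_one_left' (h1p vQ _)).trans ?_
  have := fun i (hi : i < r) => cong_ratio h vQ hu hd l i (by omega)
  exact cong_prod v _ _ _ _ (fun i hi => (this i hi).1) (fun i hi => (this i hi).2.1)
    (fun i hi => (this i hi).2.2)

include h vQ hd hu δ0 δ1 in
theorem val_T (l : ℕ) : v (∏ i ∈ range (l * n), rt 0 i) ≤ 1 := by
  obtain ⟨t, ht⟩ : ∃ t, n = 4 * t + 3 := ⟨n / 4, by omega⟩
  induction l with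
  | zero => simp
  | succ l ih =>
    rw [Nat.succ_mul, prod_range_add, map_mul]
    refine mul_le_one' ih ?_
    simp only [rt]
    rw [prod_div_distrib, prod_pow, prod_pow, map_div₀, map_pow, map_pow]
    have hden : v (∏ x ∈ range n, (1 - Q ^ (0 + 4 + 4 * ((l * n + x : ℕ) : ℤ)))) = δ := by
      obtain ⟨k, hk⟩ : ∃ k, n = k + 1 := ⟨n - 1, by omega⟩
      have e : range n = range (k + 1) := by rw [hk]
      rw [e, prod_range_succ, map_mul, val_prod_eq_one, one_mul]
      · apply hd
        · refine ⟨4 * l + 4, ?_⟩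
          rw [hk]; push_cast; ring
        · positivity
      · intro i hi
        apply hu
        convert not_dvd_aux h i (by omega) (4 * l) using 1
        push_cast; ring
    have hnum : v (∏ x ∈ range n, (1 - Q ^ (0 + 2 + 4 * ((l * n + x : ℕ) : ℤ)))) ≤ δ := by
      apply val_prod_le v _ _ _ (fun i _ => h1' vQ _) (2 * t + 1) (by omega)
      apply hd' hd
      refine ⟨4 * l + 2, ?_⟩
      rw [ht]; push_cast; ring
    rw [hden]
    exact div_le_one_of_le₀ (pow_le_pow_left' hnum 3) zero_le

include vQ in
theorem term_eq (k : ℕ) : (1 + Q ^ (4 * k + 1)) * qPoch (Q ^ 2) (Q ^ 4) k ^ 3 * Q ^ k /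
            ((1 + Q) * qPoch (Q ^ 4) (Q ^ 4) k ^ 3) =
    (1 + Q ^ (4 * k + 1 : ℤ)) * Q ^ k * (∏ i ∈ range k, rt 0 i) / (1 + Q) := by
  have Q0 := Q_ne vQ
  have : ∏ i ∈ range k, rt 0 i = qPoch (Q ^ 2) (Q ^ 4) k ^ 3 / qPoch (Q ^ 4) (Q ^ 4) k ^ 3 := by
    simp only [rt, prod_div_distrib, prod_pow, qPoch]
    congr 2 <;> refine prod_congr rfl fun i _ => ?_ <;> congr 1 <;>
      rw [← pow_mul, ← pow_add, ← zpow_natCast] <;> congr 1 <;> push_cast <;> ring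
  rw [this]
  have e : Q ^ (4 * k + 1) = Q ^ (4 * k + 1 : ℤ) := by
    rw [← zpow_natCast]; push_cast; rfl
  rw [e]
  generalize qPoch (Q ^ 4) (Q ^ 4) k = A
  generalize qPoch (Q ^ 2) (Q ^ 4) k = B
  rw [mul_div_assoc', div_div]
  congr 1 <;> ring

include h vQ hd hu δ0 δ1 in
theorem total (m : ℕ) : v (∑ k ∈ Finset.range (m * n),
          (1 + Q ^ (4 * k + 1)) * qPoch (Q ^ 2) (Q ^ 4) k ^ 3 * Q ^ k /
            ((1 + Q) * qPoch (Q ^ 4) (Q ^ 4) k ^ 3)) ≤ δ ^ 2 := by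
  have Q0 := Q_ne vQ
  have vp : v (1 + Q) = 1 := by
    have a1 := hu 1 (fun hh => by have := Int.le_of_dvd (by norm_num) hh; omega)
    have a2 := hu 2 (fun hh => by have := Int.le_of_dvd (by norm_num) hh; omega)
    have : 1 - Q ^ (2 : ℤ) = (1 - Q ^ (1 : ℤ)) * (1 + Q) := by
      rw [zpow_one, zpow_ofNat]; ring
    rw [this, map_mul, a1, one_mul] at a2
    exact a2
  simp only [term_eq vQ]
  induction m with
  | zero => simp
  | succ l ih =>
    rw [Nat.succ_mul, sum_range_add]
    refine v.map_add_le ih ?_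
    have : ∑ x ∈ range n, (1 + Q ^ (4 * ((l * n + x : ℕ) : ℤ) + 1)) * Q ^ (l * n + x) *
        (∏ i ∈ range (l * n + x), rt 0 i) / (1 + Q) =
        (Q ^ (l * n) * (∏ i ∈ range (l * n), rt 0 i) / (1 + Q)) *
        ∑ r ∈ range n, (1 + Q ^ (4 * l * n + 4 * r + 1 : ℤ)) * Q ^ r *
      ∏ i ∈ range r, rt (4 * l * n) i := by
      rw [mul_sum]
      refine sum_congr rfl fun r _ => ?_
      rw [prod_range_add, pow_add]
      have e1 : (4 * ((l * n + r : ℕ) : ℤ) + 1) = 4 * l * n + 4 * r + 1 := by push_cast; ring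
      have e2 : ∏ x ∈ range r, rt 0 (l * n + x) = ∏ i ∈ range r, rt (4 * l * n) i := by
        refine prod_congr rfl fun i _ => ?_
        simp only [rt]
        congr 4 <;> push_cast <;> ring
      rw [e1, e2]
      ring
    rw [this, map_mul, map_div₀, map_mul, map_pow, vQ, vp, one_pow, one_mul, div_one]
    exact (mul_le_of_le_one_left' (val_T h vQ δ1 δ0 hu hd l)).trans (sum_t h vQ δ1 δ0 hu hd l)
end

/-- For positive integers `m, n` with `n ≡ 3 (mod 4)`,
`∑_{k=0}^{mn-1} (1+q^{4k+1})(q^2;q^4)_k^3 q^k / ((1+q)(q^4;q^4)_k^3) ≡ 0 (mod Φ_n(q)^2)`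
in the localization of `ℚ[q]` at `Φ_n(q)`. -/
theorem stmt3 (m n : ℕ) (hm : 0 < m) (hn : 0 < n) (h : n % 4 = 3) :
    ∃ a b : Polynomial ℚ, ¬ (Polynomial.cyclotomic n ℚ ∣ b) ∧
      (∑ k ∈ Finset.range (m * n),
          (1 + Q ^ (4 * k + 1)) * qPoch (Q ^ 2) (Q ^ 4) k ^ 3 * Q ^ k /
            ((1 + Q) * qPoch (Q ^ 4) (Q ^ 4) k ^ 3))
        * algebraMap (Polynomial ℚ) (RatFunc ℚ) b
      = algebraMap (Polynomial ℚ) (RatFunc ℚ) (Polynomial.cyclotomic n ℚ ^ 2 * a) := by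
  obtain ⟨v, δ, vQ, δ1, δ0, hu, hd, hf⟩ := exists_val n (by omega)
  exact hf _ (total h vQ δ1 δ0 hu hd m)
end

section
/- Let n ≡ 3 (mod 4) be a positive integer. Then, modulo Φ_n(q)^2 · Φ_{n^2}(q)^2, the sum over k from 0 to (n^2-1)/2 of (1+q^{4k+1})(q^2;q^4)_k^3 / ((1+q)(q^4;q^4)_k^3) · q^k is congruent to [n^2]_{q^2} · (q^3;q^4)_{(n^2-1)/2} / (q^5;q^4)_{(n^2-1)/2} · q^{(1-n^2)/2}. -/
open Polynomial Finset

/-- generic q-shifted factorial -/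
def po {K : Type*} [Field K] (p x : K) (k : ℕ) : K := ∏ i ∈ range k, (1 - x * p ^ i)

lemma po_zero {K : Type*} [Field K] (p x : K) : po p x 0 = 1 := by simp [po]
lemma po_succ {K : Type*} [Field K] (p x : K) (k : ℕ) :
    po p x (k + 1) = po p x k * (1 - x * p ^ k) := by simp [po, prod_range_succ]
lemma po_succ' {K : Type*} [Field K] (p x : K) (k : ℕ) :
    po p x (k + 1) = (1 - x) * po p (x * p) k := by
  simp only [po, prod_range_succ', pow_zero, mul_one, pow_succ']
  rw [mul_comm]; congr 1; apply prod_congr rfl; intros; ring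
lemma po_ne {K : Type*} [Field K] {p x : K} (h : ∀ i : ℕ, x * p ^ i ≠ 1) (k : ℕ) : po p x k ≠ 0 :=
  prod_ne_zero_iff.2 fun i _ => sub_ne_zero.2 (h i).symm

/-- summand of 6phi5, `A = a p / d`. -/
noncomputable def F6 {K : Type*} [Field K] (p a b c d : K) (k : ℕ) : K :=
  (1 - a * p ^ (2 * k)) * po p a k * po p b k * po p c k * po p d k /
    (po p p k * po p (a * p / b) k * po p (a * p / c) k * po p (a * p / d) k) * (a * p / (b * c * d)) ^ k

lemma step_alg {K : Type*} [Field K] (p a b c d P z x1 x2 x3 x4 y1 y2 y3 y4 : K) (hp : p ≠ 0) (hb : b ≠ 0)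
    (hc : c ≠ 0) (hd : d ≠ 0) (e1 : x1 ≠ 0) (e2 : x2 ≠ 0) (e3 : x3 ≠ 0) (e4 : x4 ≠ 0)
    (f1 : 1 - p * P ≠ 0) (f2 : 1 - a * p / b * P ≠ 0) (f3 : 1 - a * p / c * P ≠ 0)
    (f4 : 1 - a * p / d * p * P ≠ 0) (h4' : 1 - a * p / d ≠ 0)
    (h5 : 1 - a * p / (d * b) ≠ 0) (h6 : 1 - a * p / (d * c) ≠ 0) :
    a * p / (d * b * c) / ((1 - a * p / (d * b)) * (1 - a * p / (d * c))) *
      (y1 * (1 - a * P) * (y2 * (1 - b * P)) * (y3 * (1 - c * P)) * y4 / (x1 * x2 * x3 * x4)) * z +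
    ((1 - a * (P * p * (P * p))) * (y1 * (1 - a * P)) * (y2 * (1 - b * P)) * (y3 * (1 - c * P)) *
      ((1 - d / p) * y4) / (x1 * (1 - p * P) * (x2 * (1 - a * p / b * P)) *
        (x3 * (1 - a * p / c * P)) * (x4 * (1 - a * p / d * p * P))) *
        (z * P * (a * p / (b * c * d) * p)) -
      (1 - a * p / d) * (1 - a * p / (d * b * c)) / ((1 - a * p / (d * b)) * (1 - a * p / (d * c))) *
      ((1 - a * (P * p * (P * p))) * (y1 * (1 - a * P)) * (y2 * (1 - b * P)) * (y3 * (1 - c * P)) *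
      (y4 * (1 - d * P)) / (x1 * (1 - p * P) * (x2 * (1 - a * p / b * P)) *
        (x3 * (1 - a * p / c * P)) * ((1 - a * p / d) * x4)) * (z * (a * p / (b * c * d))))) =
    a * p / (d * b * c) / ((1 - a * p / (d * b)) * (1 - a * p / (d * c))) *
      (y1 * (1 - a * P) * (1 - a * (P * p)) * (y2 * (1 - b * P) * (1 - b * (P * p))) *
       (y3 * (1 - c * P) * (1 - c * (P * p))) * (y4 * (1 - d * P)) /
       (x1 * (1 - p * P) * (x2 * (1 - a * p / b * P)) *
        (x3 * (1 - a * p / c * P)) * (x4 * (1 - a * p / d * p * P)))) * (z * (a * p / (b * c * d))) := by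
  have hb' : 1 - a * p / b * P = (b - a * p * P) / b := by field_simp
  have hc' : 1 - a * p / c * P = (c - a * p * P) / c := by field_simp
  have hd' : 1 - a * p / d * p * P = (d - a * p * p * P) / d := by field_simp
  have hA' : 1 - a * p / d = (d - a * p) / d := by field_simp
  have hdb' : 1 - a * p / (d * b) = (d * b - a * p) / (d * b) := by field_simp
  have hdc' : 1 - a * p / (d * c) = (d * c - a * p) / (d * c) := by field_simp
  rw [hb'] at f2 ⊢
  rw [hc'] at f3 ⊢
  rw [hd'] at f4 ⊢
  rw [hA'] at h4' ⊢
  rw [hdb'] at h5 ⊢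
  rw [hdc'] at h6 ⊢
  have k2 := (div_ne_zero_iff.1 f2).1
  have k3 := (div_ne_zero_iff.1 f3).1
  have k4 := (div_ne_zero_iff.1 f4).1
  have k5 := (div_ne_zero_iff.1 h5).1
  have k6 := (div_ne_zero_iff.1 h6).1
  have k7 := (div_ne_zero_iff.1 h4').1
  clear f2 f3 f4 h5 h6 h4' hb' hc' hd' hA' hdb' hdc'
  obtain ⟨n1, hn1⟩ : ∃ x, x = 1 - p * P := ⟨_, rfl⟩
  obtain ⟨n2, hn2⟩ : ∃ x, x = b - a * p * P := ⟨_, rfl⟩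
  obtain ⟨n3, hn3⟩ : ∃ x, x = c - a * p * P := ⟨_, rfl⟩
  obtain ⟨n4, hn4⟩ : ∃ x, x = d - a * p * p * P := ⟨_, rfl⟩
  obtain ⟨n5, hn5⟩ : ∃ x, x = d * b - a * p := ⟨_, rfl⟩
  obtain ⟨n6, hn6⟩ : ∃ x, x = d * c - a * p := ⟨_, rfl⟩
  obtain ⟨n7, hn7⟩ : ∃ x, x = d - a * p := ⟨_, rfl⟩
  rw [← hn1] at f1 ⊢
  rw [← hn2] at k2 ⊢
  rw [← hn3] at k3 ⊢
  rw [← hn4] at k4 ⊢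
  rw [← hn5] at k5 ⊢
  rw [← hn6] at k6 ⊢
  rw [← hn7] at k7 ⊢
  obtain ⟨m1, hm1⟩ : ∃ x, x = 1 - a * P := ⟨_, rfl⟩
  obtain ⟨m2, hm2⟩ : ∃ x, x = 1 - b * P := ⟨_, rfl⟩
  obtain ⟨m3, hm3⟩ : ∃ x, x = 1 - c * P := ⟨_, rfl⟩
  rw [← hm1, ← hm2, ← hm3]
  field_simp
  subst_vars
  ring

lemma F6_partial {K : Type*} [Field K] (p a b c d : K) (hp : p ≠ 0) (hb : b ≠ 0) (hc : c ≠ 0)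
    (hd : d ≠ 0)
    (h1 : ∀ i : ℕ, p * p ^ i ≠ 1) (h2 : ∀ i : ℕ, a * p / b * p ^ i ≠ 1)
    (h3 : ∀ i : ℕ, a * p / c * p ^ i ≠ 1) (h4 : ∀ i : ℕ, a * p / d * p ^ i ≠ 1)
    (h5 : 1 - a * p / (d * b) ≠ 0) (h6 : 1 - a * p / (d * c) ≠ 0) (L : ℕ) :
    ∑ k ∈ range (L + 1), (F6 p a b c (d / p) k -
      (1 - a * p / d) * (1 - a * p / (d * b * c)) / ((1 - a * p / (d * b)) * (1 - a * p / (d * c)))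
        * F6 p a b c d k) =
    a * p / (d * b * c) / ((1 - a * p / (d * b)) * (1 - a * p / (d * c))) *
      (po p a (L + 1) * po p b (L + 1) * po p c (L + 1) * po p d L /
      (po p p L * po p (a * p / b) L * po p (a * p / c) L * po p (a * p / d * p) L)) *
      (a * p / (b * c * d)) ^ L := by
  have h4' : 1 - a * p / d ≠ 0 := sub_ne_zero.2 (by simpa using (h4 0).symm)
  have hA : ∀ i : ℕ, a * p / d * p * p ^ i ≠ 1 := fun i => by
    rw [mul_assoc, ← pow_succ']; exact h4 _
  induction L with
  | zero =>
    simp only [F6, po_zero, po_succ, zero_add, sum_range_one, mul_zero, pow_zero, mul_one, div_one, one_mul]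
    have hdb' : 1 - a * p / (d * b) = (d * b - a * p) / (d * b) := by field_simp
    have hdc' : 1 - a * p / (d * c) = (d * c - a * p) / (d * c) := by field_simp
    rw [hdb'] at h5 ⊢
    rw [hdc'] at h6 ⊢
    have k5 := (div_ne_zero_iff.1 h5).1
    have k6 := (div_ne_zero_iff.1 h6).1
    obtain ⟨n5, hn5⟩ : ∃ x, x = d * b - a * p := ⟨_, rfl⟩
    obtain ⟨n6, hn6⟩ : ∃ x, x = d * c - a * p := ⟨_, rfl⟩
    rw [← hn5] at k5 ⊢
    rw [← hn6] at k6 ⊢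
    clear h1 h2 h3 h4 h5 h6 hA h4' hdb' hdc'
    field_simp
    subst hn5 hn6
    ring
  | succ L ih =>
    rw [sum_range_succ, ih]
    have e1 := po_ne h1 L
    have e2 := po_ne h2 L
    have e3 := po_ne h3 L
    have e4 := po_ne hA L
    have f1 := sub_ne_zero.2 (h1 L).symm
    have f2 := sub_ne_zero.2 (h2 L).symm
    have f3 := sub_ne_zero.2 (h3 L).symm
    have f4 := sub_ne_zero.2 (hA L).symm
    have g1 : po p (d / p) (L + 1) = (1 - d / p) * po p d L := by
      rw [po_succ', div_mul_cancel₀ _ hp]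
    have g2 : po p (a * p / d) (L + 1) = (1 - a * p / d) * po p (a * p / d * p) L := po_succ' _ _ _
    have g3 : a * p / (d / p) = a * p / d * p := by field_simp
    have g4 : a * p / (b * c * (d / p)) = a * p / (b * c * d) * p := by field_simp
    simp only [F6]
    have g5 : p ^ (2 * (L + 1)) = p ^ L * p * (p ^ L * p) := by ring
    rw [g1, g2, g3, g4, g5]
    simp only [po_succ, pow_succ, mul_pow]
    exact step_alg p a b c d _ _ _ _ _ _ _ _ _ _ hp hb hc hd e1 e2 e3 e4 f1 f2 f3 f4 h4' h5 h6

lemma F6_sum {K : Type*} [Field K] (p a b c : K) (hp : p ≠ 0) (hb : b ≠ 0) (hc : c ≠ 0)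
    (h1 : ∀ i : ℕ, p * p ^ i ≠ 1) (h2 : ∀ i : ℕ, a * p / b * p ^ i ≠ 1)
    (h3 : ∀ i : ℕ, a * p / c * p ^ i ≠ 1) (h4 : ∀ i : ℕ, a * p * p ^ i ≠ 1) (m : ℕ) :
    ∑ k ∈ range (m + 1), F6 p a b c (p ^ m)⁻¹ k =
      (1 - a) * po p (a * p) m * po p (a * p / (b * c)) m /
        (po p (a * p / b) m * po p (a * p / c) m) := by
  induction m with
  | zero => simp [F6, po_zero]
  | succ m ih =>
    have hpm : p ^ m ≠ 0 := pow_ne_zero _ hp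
    have e5 : a * p / ((p ^ m)⁻¹ * b) = a * p / b * p ^ m := by field_simp
    have e6 : a * p / ((p ^ m)⁻¹ * c) = a * p / c * p ^ m := by field_simp
    have e7 : a * p / ((p ^ m)⁻¹ * b * c) = a * p / (b * c) * p ^ m := by field_simp
    have e8 : a * p / (p ^ m)⁻¹ = a * p * p ^ m := by field_simp
    have e9 : (p ^ m)⁻¹ / p = (p ^ (m + 1))⁻¹ := by rw [pow_succ]; field_simp
    have k5 := sub_ne_zero.2 (h2 m).symm
    have k6 := sub_ne_zero.2 (h3 m).symm
    have hz : po p (p ^ m)⁻¹ (m + 1) = 0 := by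
      rw [po_succ, inv_mul_cancel₀ hpm]; simp
    have := F6_partial p a b c (p ^ m)⁻¹ hp hb hc (inv_ne_zero hpm) h1 h2 h3
      (fun i => by rw [e8, mul_assoc, ← pow_add]; exact h4 _) (by rw [e5]; exact k5)
      (by rw [e6]; exact k6) (m + 1)
    rw [hz, e5, e6, e7, e8, e9, sum_sub_distrib, ← mul_sum, sum_range_succ (fun k => F6 p a b c (p ^ m)⁻¹ k), ih] at this
    have hF : F6 p a b c (p ^ m)⁻¹ (m + 1) = 0 := by simp [F6, hz]
    rw [hF] at this
    simp only [mul_zero, zero_div, zero_mul, add_zero] at this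
    rw [sub_eq_zero] at this
    rw [this]
    simp only [po_succ]
    have n1 := po_ne h2 m
    have n2 := po_ne h3 m
    field_simp

lemma po_reflect {K : Type*} [Field K] (q : K) (hq0 : q ≠ 0) (s m : ℕ) :
    po (q ^ 4) (q ^ 4 / q ^ s * (q ^ (4 * m))⁻¹) m =
      (∏ i ∈ range m, (-(q ^ (s + 4 * i))⁻¹)) * po (q ^ 4) (q ^ s) m := by
  unfold po
  rw [← prod_range_reflect, ← prod_mul_distrib]
  apply prod_congr rfl
  intro i hi
  have hi := mem_range.1 hi
  obtain ⟨j, rfl⟩ : ∃ j, m = i + 1 + j := ⟨m - (i + 1), by omega⟩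
  have : i + 1 + j - 1 - i = j := by omega
  rw [this]
  have e : q ^ (4 * (i + 1 + j)) = q ^ (4 * i) * q ^ 4 * q ^ (4 * j) := by ring
  rw [e, ← pow_mul, ← pow_mul, pow_add]
  field_simp
  ring

lemma geom2 {K : Type*} [Field K] (q : K) (N : ℕ) :
    (∑ i ∈ range N, q ^ (2 * i)) * (1 - q ^ 2) = 1 - q ^ (2 * N) := by
  have := geom_sum_mul_neg (q ^ 2) N
  simpa only [← pow_mul] using this

/-- the specialised sum -/
lemma sum_spec {K : Type*} [Field K] (q : K) (hq0 : q ≠ 0)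
    (hq : ∀ a b : ℕ, a ≠ b → q ^ a ≠ q ^ b) (m : ℕ) (x : K) (hx : x = q ^ (4 * m + 2)) :
    ∑ k ∈ range (m + 1), (1 + q ^ (4 * k + 1)) * q ^ k * (po (q ^ 4) (q ^ 2) k / po (q ^ 4) (q ^ 4) k) *
      (po (q ^ 4) (q ^ 2 * x) k * po (q ^ 4) (q ^ 2 / x) k /
        (po (q ^ 4) (q ^ 4 * x) k * po (q ^ 4) (q ^ 4 / x) k)) =
    (1 + q) * ((∑ i ∈ range (2 * m + 1), q ^ (2 * i)) * po (q ^ 4) (q ^ 3) m / po (q ^ 4) (q ^ 5) m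
      * (q ^ m)⁻¹) := by
  have hx0 : x ≠ 0 := by rw [hx]; exact pow_ne_zero _ hq0
  have hone : ∀ a : ℕ, a ≠ 0 → q ^ a ≠ 1 := fun a ha => by simpa using hq a 0 ha
  have hq1 : 1 - q ≠ 0 := sub_ne_zero.2 (by simpa using (hone 1 one_ne_zero).symm)
  have hq2 : 1 - q ^ 2 ≠ 0 := sub_ne_zero.2 (hone 2 two_ne_zero).symm
  have e1 : q ^ 2 * q ^ 4 / q = q ^ 5 := by field_simp
  have e2 : q ^ 2 * q ^ 4 / (q ^ 2 * x) = q ^ 4 / x := by field_simp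
  have e3 : q ^ 2 / x = ((q ^ 4) ^ m)⁻¹ := by rw [hx, ← pow_mul, pow_add]; field_simp
  have h2 : ∀ i : ℕ, q ^ 5 * (q ^ 4) ^ i ≠ 1 := fun i => by
    rw [← pow_mul, ← pow_add]; exact hone _ (by omega)
  have h3 : ∀ i : ℕ, q ^ 4 / x * (q ^ 4) ^ i ≠ 1 := fun i => by
    rw [← pow_mul, div_mul_eq_mul_div, ← pow_add, hx]
    intro h
    rw [div_eq_one_iff_eq (pow_ne_zero _ hq0)] at h
    exact hq _ _ (by omega) h
  have main := F6_sum (q ^ 4) (q ^ 2) q (q ^ 2 * x) (pow_ne_zero _ hq0) hq0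
    (mul_ne_zero (pow_ne_zero _ hq0) hx0)
    (fun i => by rw [← pow_mul, ← pow_add]; exact hone _ (by omega))
    (fun i => by rw [e1]; exact h2 i)
    (fun i => by rw [e2]; exact h3 i)
    (fun i => by rw [← pow_mul, ← pow_add, ← pow_add]; exact hone _ (by omega)) m
  have hterm : ∀ k, (1 - q) * ((1 + q ^ (4 * k + 1)) * q ^ k * (po (q ^ 4) (q ^ 2) k / po (q ^ 4) (q ^ 4) k) *
      (po (q ^ 4) (q ^ 2 * x) k * po (q ^ 4) (q ^ 2 / x) k /
        (po (q ^ 4) (q ^ 4 * x) k * po (q ^ 4) (q ^ 4 / x) k))) =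
      F6 (q ^ 4) (q ^ 2) q (q ^ 2 * x) ((q ^ 4) ^ m)⁻¹ k := by
    intro k
    have e4 : q ^ 2 * q ^ 4 / (q ^ 2 / x) = q ^ 4 * x := by field_simp
    have e5 : q ^ 2 * q ^ 4 / (q * (q ^ 2 * x) * (q ^ 2 / x)) = q := by field_simp
    have e6 : po (q ^ 4) q k * (1 - q ^ (4 * k + 1)) = (1 - q) * po (q ^ 4) (q ^ 5) k := by
      have a1 := po_succ (q ^ 4) q k
      rw [po_succ', ← pow_succ'] at a1
      rw [a1, ← pow_mul, pow_succ' q (4 * k)]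
    have e7 : 1 - q ^ 2 * (q ^ 4) ^ (2 * k) = (1 - q ^ (4 * k + 1)) * (1 + q ^ (4 * k + 1)) := by ring
    rw [← e3, F6, e1, e2, e4, e5, e7]
    have n := po_ne h2 k
    rw [show (1 - q ^ (4 * k + 1)) * (1 + q ^ (4 * k + 1)) * po (q ^ 4) (q ^ 2) k * po (q ^ 4) q k *
      po (q ^ 4) (q ^ 2 * x) k * po (q ^ 4) (q ^ 2 / x) k = (po (q ^ 4) q k * (1 - q ^ (4 * k + 1))) *
      ((1 + q ^ (4 * k + 1)) * po (q ^ 4) (q ^ 2) k *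
      po (q ^ 4) (q ^ 2 * x) k * po (q ^ 4) (q ^ 2 / x) k) by ring, e6]
    field_simp
  apply mul_left_cancel₀ hq1
  rw [mul_sum, sum_congr rfl (fun k _ => hterm k), main, e1, e2]
  have r1 := po_reflect q hq0 3 m
  have r2 := po_reflect q hq0 2 m
  have s1 : q ^ 2 * q ^ 4 / (q * (q ^ 2 * x)) = q ^ 4 / q ^ 3 * (q ^ (4 * m))⁻¹ := by
    rw [hx, pow_add]; field_simp
  have s2 : q ^ 4 / x = q ^ 4 / q ^ 2 * (q ^ (4 * m))⁻¹ := by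
    rw [hx, pow_add]; field_simp
  have s3 : (∏ i ∈ range m, (-(q ^ (3 + 4 * i))⁻¹)) = (q ^ m)⁻¹ * (∏ i ∈ range m, (-(q ^ (2 + 4 * i))⁻¹)) := by
    rw [← inv_pow, ← card_range m, ← prod_const, card_range, ← prod_mul_distrib]
    apply prod_congr rfl
    intro i _
    rw [show 3 + 4 * i = (2 + 4 * i) + 1 by ring, pow_succ]
    field_simp
  have n3 : (∏ i ∈ range m, (-(q ^ (2 + 4 * i))⁻¹)) ≠ 0 :=
    prod_ne_zero_iff.2 fun i _ => neg_ne_zero.2 (inv_ne_zero (pow_ne_zero _ hq0))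
  have n2 : po (q ^ 4) (q ^ 2) m ≠ 0 := po_ne (fun i => by
    rw [← pow_mul, ← pow_add]; exact hone _ (by omega)) m
  have s4 : (1 - q ^ 2) * po (q ^ 4) (q ^ 2 * q ^ 4) m = po (q ^ 4) (q ^ 2) m * (1 - q ^ (2 * (2 * m + 1))) := by
    rw [← po_succ', po_succ, ← pow_mul, ← pow_add]; congr 3; ring
  rw [s1, s2, r1, r2, s3, s4, ← geom2]
  have n5 := po_ne h2 m
  have hqm : q ^ m ≠ 0 := pow_ne_zero _ hq0
  generalize (∏ i ∈ range m, (-(q ^ (2 + 4 * i))⁻¹)) = w at *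
  generalize (∑ i ∈ range (2 * m + 1), q ^ (2 * i)) = w' at *
  field_simp
  ring

/-- block summand -/
noncomputable def dd {K : Type*} [Field K] (q y : K) (r : ℕ) : K :=
  po (q ^ 4) (q ^ 2 * y) r / po (q ^ 4) (q ^ 4 * y) r

noncomputable def TT {K : Type*} [Field K] (q y : K) (r : ℕ) : K :=
  (1 + q ^ (4 * r + 1) * y) * q ^ r * dd q y r ^ 3

lemma dd_succ {K : Type*} [Field K] (q y : K) (r : ℕ) :
    dd q y (r + 1) = dd q y r * ((1 - q ^ 2 * y * (q ^ 4) ^ r) / (1 - q ^ 4 * y * (q ^ 4) ^ r)) := by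
  simp only [dd, po_succ, mul_div_mul_comm]

lemma dd_symm {K : Type*} [Field K] (q : K) (hq0 : q ≠ 0)
    (hq : ∀ a b : ℕ, a ≠ b → q ^ a ≠ q ^ b) (g : ℕ) (r : ℕ) (hr : r ≤ g) :
    dd q (q ^ (4 * g + 3))⁻¹ (g + 1 + r) = - (q ^ (1 + 2 * r))⁻¹ * dd q (q ^ (4 * g + 3))⁻¹ (g - r) := by
  have hone : ∀ a : ℕ, a ≠ 0 → 1 - q ^ a ≠ 0 := fun a ha => sub_ne_zero.2 (by simpa using (hq a 0 ha).symm)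
  have hone' : ∀ a : ℕ, a ≠ 0 → q ^ a - 1 ≠ 0 := fun a ha => sub_ne_zero.2 (by simpa using (hq a 0 ha))
  induction r with
  | zero =>
    simp only [add_zero, mul_zero, Nat.sub_zero, pow_one]
    rw [dd_succ, mul_comm]
    congr 1
    have e1 : q ^ 2 * (q ^ (4 * g + 3))⁻¹ * (q ^ 4) ^ g = q⁻¹ := by
      rw [← pow_mul, pow_add]; field_simp
    have e2 : q ^ 4 * (q ^ (4 * g + 3))⁻¹ * (q ^ 4) ^ g = q := by
      rw [← pow_mul, pow_add]; field_simp
    rw [e1, e2]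
    have := hone 1 one_ne_zero
    rw [pow_one] at this
    field_simp
    ring
  | succ r ih =>
    obtain ⟨j, rfl⟩ : ∃ j, g = r + 1 + j := ⟨g - (r + 1), by omega⟩
    have ih := ih (by omega)
    rw [show r + 1 + j - r = j + 1 by omega] at ih
    rw [show r + 1 + j - (r + 1) = j by omega]
    rw [← add_assoc, dd_succ, ih, dd_succ]
    have e1 : q ^ 2 * (q ^ (4 * (r + 1 + j) + 3))⁻¹ * (q ^ 4) ^ (r + 1 + j + 1 + r) = q ^ (4 * r + 3) := by
      rw [← pow_mul, show 4 * (r + 1 + j + 1 + r) = 4 * (r + 1 + j) + 3 + (4 * r + 1) by ring, pow_add q (4 * (r + 1 + j) + 3)]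
      field_simp
      ring
    have e2 : q ^ 4 * (q ^ (4 * (r + 1 + j) + 3))⁻¹ * (q ^ 4) ^ (r + 1 + j + 1 + r) = q ^ (4 * r + 5) := by
      rw [← pow_mul, show 4 * (r + 1 + j + 1 + r) = 4 * (r + 1 + j) + 3 + (4 * r + 1) by ring, pow_add q (4 * (r + 1 + j) + 3)]
      field_simp
      ring
    have e3 : q ^ 2 * (q ^ (4 * (r + 1 + j) + 3))⁻¹ * (q ^ 4) ^ j = (q ^ (4 * r + 5))⁻¹ := by
      rw [← pow_mul, show 4 * (r + 1 + j) + 3 = 4 * j + (4 * r + 5) + 2 by ring, pow_add, pow_add]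
      field_simp
    have e4 : q ^ 4 * (q ^ (4 * (r + 1 + j) + 3))⁻¹ * (q ^ 4) ^ j = (q ^ (4 * r + 3))⁻¹ := by
      rw [← pow_mul, show 4 * (r + 1 + j) + 3 = 4 * j + (4 * r + 3) + 4 by ring, pow_add, pow_add]
      field_simp
    rw [e1, e2, e3, e4]
    have n1 := hone (4 * r + 3) (by omega)
    have n2 := hone (4 * r + 5) (by omega)
    have n3 := hone' (4 * r + 3) (by omega)
    generalize dd q (q ^ (4 * (r + 1 + j) + 3))⁻¹ j = D
    have e5 : q ^ (4 * r + 5) = q ^ (4 * r + 3) * q ^ 2 := by ring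
    have e6 : q ^ (1 + 2 * (r + 1)) = q ^ (1 + 2 * r) * q ^ 2 := by ring
    rw [e5] at n2 ⊢
    rw [e6]
    have z1 : q ^ (4 * r + 3) ≠ 0 := pow_ne_zero _ hq0
    have z2 : q ^ (1 + 2 * r) ≠ 0 := pow_ne_zero _ hq0
    generalize q ^ (4 * r + 3) = X at *
    generalize q ^ (1 + 2 * r) = Y at *
    field_simp
    ring

lemma TT_symm_sum {K : Type*} [Field K] (q : K) (hq0 : q ≠ 0)
    (hq : ∀ a b : ℕ, a ≠ b → q ^ a ≠ q ^ b) (g : ℕ) :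
    ∑ r ∈ range (2 * g + 1 + 1), TT q (q ^ (4 * g + 3))⁻¹ r = 0 := by
  rw [show 2 * g + 1 + 1 = (g + 1) + (g + 1) by ring, sum_range_add, ← sum_range_reflect, ← sum_add_distrib]
  apply sum_eq_zero
  intro r hr
  have hr : r ≤ g := by have := mem_range.1 hr; omega
  have := dd_symm q hq0 hq g r hr
  rw [show g + 1 - 1 - r = g - r by omega, TT, TT, this]
  obtain ⟨j, rfl⟩ : ∃ j, g = r + j := ⟨g - r, by omega⟩
  rw [show r + j - r = j by omega]
  generalize dd q (q ^ (4 * (r + j) + 3))⁻¹ j = D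
  have e1 : q ^ (4 * j + 1) * (q ^ (4 * (r + j) + 3))⁻¹ = (q ^ (4 * r + 2))⁻¹ := by
    rw [show 4 * (r + j) + 3 = (4 * j + 1) + (4 * r + 2) by ring, pow_add q (4 * j + 1) (4 * r + 2)]; field_simp
  have e2 : q ^ (4 * (r + j + 1 + r) + 1) * (q ^ (4 * (r + j) + 3))⁻¹ = q ^ (4 * r + 2) := by
    rw [show 4 * (r + j + 1 + r) + 1 = (4 * (r + j) + 3) + (4 * r + 2) by ring, pow_add q (4 * (r + j) + 3)]; field_simp
  rw [e1, e2, show q ^ (r + j + 1 + r) = q ^ j * q ^ (1 + 2 * r) by ring,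
    show q ^ (4 * r + 2) = q ^ (1 + 2 * r) * q ^ (1 + 2 * r) by ring]
  have z2 : q ^ (1 + 2 * r) ≠ 0 := pow_ne_zero _ hq0
  generalize q ^ (1 + 2 * r) = Y at *
  field_simp
  ring

structure Loc {K : Type*} [Field K] (q : K) (n : ℕ) (O : Subring K) (π : K) : Prop where
  q0 : q ≠ 0
  inj : ∀ a b : ℕ, a ≠ b → q ^ a ≠ q ^ b
  pim : π ∈ O
  pi0 : π ≠ 0
  qm : q ∈ O
  qi : q⁻¹ ∈ O
  unit : ∀ e : ℕ, ¬ n ∣ e → (1 - q ^ e)⁻¹ ∈ O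
  unif : ∀ e : ℕ, 0 < e → n ∣ e → ∃ u ∈ O, u⁻¹ ∈ O ∧ u ≠ 0 ∧ 1 - q ^ e = π * u
  loc : ∀ o ∈ O, 1 + π * o ≠ 0 ∧ (1 + π * o)⁻¹ ∈ O

def VV {K : Type*} [Field K] (O : Subring K) (π : K) (k : ℕ) (f : K) : Prop := ∃ o ∈ O, f = π ^ k * o

def UU {K : Type*} [Field K] (O : Subring K) (f : K) : Prop := f ≠ 0 ∧ f ∈ O ∧ f⁻¹ ∈ O

section loc
variable {K : Type*} [Field K] {q : K} {n : ℕ} {O : Subring K} {π : K}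

lemma VV.add {k : ℕ} {f g : K} (hf : VV O π k f) (hg : VV O π k g) : VV O π k (f + g) := by
  obtain ⟨a, ha, rfl⟩ := hf; obtain ⟨b, hb, rfl⟩ := hg
  exact ⟨a + b, O.add_mem ha hb, by ring⟩
lemma VV.neg {k : ℕ} {f : K} (hf : VV O π k f) : VV O π k (-f) := by
  obtain ⟨a, ha, rfl⟩ := hf
  exact ⟨-a, O.neg_mem ha, by ring⟩
lemma VV.sub {k : ℕ} {f g : K} (hf : VV O π k f) (hg : VV O π k g) : VV O π k (f - g) := by
  rw [sub_eq_add_neg]; exact hf.add hg.neg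
lemma VV.mul {k l : ℕ} {f g : K} (hf : VV O π k f) (hg : VV O π l g) : VV O π (k + l) (f * g) := by
  obtain ⟨a, ha, rfl⟩ := hf; obtain ⟨b, hb, rfl⟩ := hg
  exact ⟨a * b, O.mul_mem ha hb, by ring⟩
lemma VV.zero {k : ℕ} : VV O π k 0 := ⟨0, O.zero_mem, by simp⟩
lemma VV.of_mem {f : K} (hf : f ∈ O) : VV O π 0 f := ⟨f, hf, by simp⟩
lemma VV.mem0 {f : K} (hf : VV O π 0 f) : f ∈ O := by
  obtain ⟨a, ha, rfl⟩ := hf; simpa using ha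
lemma VV.mem {k : ℕ} {f : K} (hp : π ∈ O) (hf : VV O π k f) : f ∈ O := by
  obtain ⟨a, ha, rfl⟩ := hf; exact O.mul_mem (O.pow_mem hp _) ha
lemma VV.mulO {k : ℕ} {f g : K} (hf : VV O π k f) (hg : g ∈ O) : VV O π k (f * g) :=
  hf.mul (VV.of_mem hg)
lemma VV.Omul {k : ℕ} {f g : K} (hf : VV O π k f) (hg : g ∈ O) : VV O π k (g * f) := by
  rw [mul_comm]; exact hf.mulO hg
lemma VV.sum {k : ℕ} {s : Finset ℕ} {f : ℕ → K} (hf : ∀ i ∈ s, VV O π k (f i)) :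
    VV O π k (∑ i ∈ s, f i) := by
  induction s using Finset.induction_on with
  | empty => simpa using VV.zero
  | insert a s ha ih =>
    rw [sum_insert ha]
    exact (hf a (by simp)).add (ih fun i hi => hf i (by simp [hi]))
lemma VV.mono {k l : ℕ} {f : K} (hp : π ∈ O) (hkl : l ≤ k) (hf : VV O π k f) : VV O π l f := by
  obtain ⟨a, ha, rfl⟩ := hf
  obtain ⟨j, rfl⟩ := Nat.exists_eq_add_of_le hkl
  exact ⟨π ^ j * a, O.mul_mem (O.pow_mem hp _) ha, by ring⟩

lemma UU.mul {f g : K} (hf : UU O f) (hg : UU O g) : UU O (f * g) :=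
  ⟨mul_ne_zero hf.1 hg.1, O.mul_mem hf.2.1 hg.2.1, by rw [mul_inv]; exact O.mul_mem hf.2.2 hg.2.2⟩
lemma UU.one : UU O (1 : K) := ⟨one_ne_zero, O.one_mem, by simpa using O.one_mem⟩
lemma UU.pow {f : K} (hf : UU O f) (k : ℕ) : UU O (f ^ k) := by
  induction k with
  | zero => simpa using UU.one
  | succ k ih => rw [pow_succ]; exact ih.mul hf
lemma UU.inv {f : K} (hf : UU O f) : UU O f⁻¹ := ⟨inv_ne_zero hf.1, hf.2.2, by simpa using hf.2.1⟩

lemma Loc.uq (H : Loc q n O π) : UU O q := ⟨H.q0, H.qm, H.qi⟩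
lemma Loc.ne (H : Loc q n O π) (e : ℕ) (he : e ≠ 0) : 1 - q ^ e ≠ 0 :=
  sub_ne_zero.2 (by simpa using (H.inj e 0 he).symm)
lemma Loc.u1 (H : Loc q n O π) (e : ℕ) (he : ¬ n ∣ e) : UU O (1 - q ^ e) :=
  ⟨H.ne e (by rintro rfl; simp at he), O.sub_mem O.one_mem (O.pow_mem H.qm _), H.unit e he⟩
lemma Loc.uadd (H : Loc q n O π) {f g : K} (hf : UU O f) (hg : VV O π 1 (g - f)) : UU O g := by
  obtain ⟨a, ha, h⟩ := hg
  have e : g = f * (1 + π * (f⁻¹ * a)) := by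
    have := hf.1
    rw [sub_eq_iff_eq_add] at h
    rw [h]; field_simp; ring
  have hm := O.mul_mem hf.2.2 ha
  rw [e]
  exact hf.mul ⟨(H.loc _ hm).1, O.add_mem O.one_mem (O.mul_mem H.pim hm), (H.loc _ hm).2⟩

/-- cong division -/
lemma Loc.div_cong (H : Loc q n O π) {A A' B B' : K} (hA : A ∈ O) (hB : UU O B) (h1 : VV O π 2 (A' - A))
    (h2 : VV O π 2 (B' - B)) : VV O π 2 (A' / B' - A / B) := by
  have hB' : UU O B' := H.uadd hB (h2.mono H.pim (by omega))
  have e : A' / B' - A / B = (A' - A) * B'⁻¹ - (B' - B) * (A * (B⁻¹ * B'⁻¹)) := by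
    have := hB.1; have := hB'.1
    field_simp; ring
  rw [e]
  exact (h1.mulO hB'.2.2).sub (h2.mulO (O.mul_mem hA (O.mul_mem hB.2.2 hB'.2.2)))

lemma mul_cong {A A' B B' : K} (hA : A' ∈ O) (hB : B ∈ O) (h1 : VV O π 2 (A' - A))
    (h2 : VV O π 2 (B' - B)) : VV O π 2 (A' * B' - A * B) := by
  rw [show A' * B' - A * B = (A' - A) * B + (B' - B) * A' by ring]
  exact (h1.mulO hB).add (h2.mulO hA)

lemma Loc.po_mem (H : Loc q n O π) (x : K) (hx : x ∈ O) (k : ℕ) : po (q ^ 4) x k ∈ O :=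
  O.prod_mem fun i _ => O.sub_mem O.one_mem (O.mul_mem hx (O.pow_mem (O.pow_mem H.qm _) _))

lemma Loc.po_cong (H : Loc q n O π) (x t : K) (hx : UU O x) (ht : t ∈ O) (h : VV O π 1 (1 - x)) (k : ℕ) :
    VV O π 2 (po (q ^ 4) (t * x) k * po (q ^ 4) (t / x) k - po (q ^ 4) t k ^ 2) := by
  have htx : t * x ∈ O := O.mul_mem ht hx.2.1
  have htx' : t / x ∈ O := by rw [div_eq_mul_inv]; exact O.mul_mem ht hx.2.2
  induction k with
  | zero => simpa [po_zero] using VV.zero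
  | succ k ih =>
    simp only [po_succ]
    have hq4 : (q ^ 4) ^ k ∈ O := O.pow_mem (O.pow_mem H.qm _) _
    have := mul_cong (O.mul_mem (H.po_mem _ htx k) (H.po_mem _ htx' k))
      (O.pow_mem (O.sub_mem O.one_mem (O.mul_mem ht hq4)) 2) ih
      (B' := (1 - t * x * (q ^ 4) ^ k) * (1 - t / x * (q ^ 4) ^ k)) (B := (1 - t * (q ^ 4) ^ k) ^ 2) (by
        have e : (1 - t * x * (q ^ 4) ^ k) * (1 - t / x * (q ^ 4) ^ k) - (1 - t * (q ^ 4) ^ k) ^ 2 =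
          (1 - x) * (1 - x) * (- (t * (q ^ 4) ^ k * x⁻¹)) := by
          have := hx.1
          field_simp; ring
        rw [e]
        exact (h.mul h).mulO (O.neg_mem (O.mul_mem (O.mul_mem ht hq4) hx.2.2)))
    convert this using 1
    ring

lemma Loc.po_unit (H : Loc q n O π) (s k : ℕ) (h : ∀ i < k, ¬ n ∣ s + 4 * i) : UU O (po (q ^ 4) (q ^ s) k) := by
  induction k with
  | zero => simpa [po_zero] using UU.one
  | succ k ih =>
    rw [po_succ, ← pow_mul, ← pow_add]
    exact (ih fun i hi => h i (by omega)).mul (H.u1 _ (h k (by omega)))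

lemma Loc.po_val (H : Loc q n O π) (s k : ℕ) (hs : 0 < s) : ∃ u, UU O u ∧
    po (q ^ 4) (q ^ s) k = π ^ (Nat.count (fun i => n ∣ s + 4 * i) k) * u := by
  induction k with
  | zero => exact ⟨1, UU.one, by simp [po_zero]⟩
  | succ k ih =>
    obtain ⟨u, hu, e⟩ := ih
    rw [po_succ, ← pow_mul, ← pow_add, Nat.count_succ, e]
    split_ifs with hd
    · obtain ⟨v, hv, hv', hv0, e'⟩ := H.unif _ (by omega) hd
      exact ⟨u * v, hu.mul ⟨hv0, hv, hv'⟩, by rw [e']; ring⟩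
    · exact ⟨u * _, hu.mul (H.u1 _ hd), by ring⟩
end loc

lemma count_lem (n s i0 k : ℕ) (hn : n % 2 = 1) (h0 : n ∣ s + 4 * i0) (hi : i0 < n) :
    Nat.count (fun i => n ∣ s + 4 * i) k = k / n + if i0 < k % n then 1 else 0 := by
  have hpos : 0 < n := by omega
  have := Nat.count_modEq_card (b := k) (r := n) hpos i0
  rw [Nat.mod_eq_of_lt hi] at this
  rw [← this]
  congr 1
  ext i
  have hc : Nat.Coprime n 4 := by
    have : Nat.Coprime n 2 := by
      exact Nat.coprime_two_right.2 (Nat.odd_iff.2 hn)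
    exact Nat.Coprime.pow_right 2 this
  constructor
  · intro h
    have h1 : (s + 4 * i) ≡ (s + 4 * i0) [MOD n] :=
      ((Nat.modEq_zero_iff_dvd.2 h).trans (Nat.modEq_zero_iff_dvd.2 h0).symm)
    have h2 := Nat.ModEq.add_left_cancel' s h1
    exact Nat.ModEq.cancel_left_of_coprime hc h2
  · intro h
    have h1 : (s + 4 * i) ≡ (s + 4 * i0) [MOD n] := (h.mul_left 4).add_left s
    exact Nat.modEq_zero_iff_dvd.1 (h1.trans (Nat.modEq_zero_iff_dvd.2 h0))

noncomputable def RR {K : Type*} [Field K] (q : K) (m : ℕ) : K :=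
  (∑ i ∈ range (2 * m + 1), q ^ (2 * i)) * po (q ^ 4) (q ^ 3) m / po (q ^ 4) (q ^ 5) m * (q ^ m)⁻¹

section loc2
variable {K : Type*} [Field K] {q : K} {n : ℕ} {O : Subring K} {π : K}

lemma Loc.unit4 (H : Loc q n O π) (hn : n % 2 = 1) (k : ℕ) (hk : k < n) :
    UU O (po (q ^ 4) (q ^ 4) k) := by
  apply H.po_unit
  intro i hi hd
  have hc : Nat.Coprime n 4 :=
    Nat.Coprime.pow_right 2 (Nat.coprime_two_right.2 (Nat.odd_iff.2 hn))
  have : n ∣ 4 * (i + 1) := by rwa [show 4 * (i + 1) = 4 + 4 * i by ring]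
  have := Nat.le_of_dvd (by omega) (hc.dvd_of_dvd_mul_left this)
  omega

lemma Loc.lemX (m : ℕ) (H : Loc q (2 * m + 1) O π) :
    VV O π 2 (∑ k ∈ range (m + 1), TT q 1 k - (1 + q) * RR q m) := by
  rw [RR, ← sum_spec q H.q0 H.inj m _ rfl, ← sum_sub_distrib]
  apply VV.sum
  intro k hk
  have hk := mem_range.1 hk
  have u4 := H.unit4 (by omega) k (by omega)
  have hx : UU O (q ^ (4 * m + 2)) := H.uq.pow _
  have hx1 : VV O π 1 (1 - q ^ (4 * m + 2)) := by
    obtain ⟨u, hu, -, -, e⟩ := H.unif (4 * m + 2) (by omega) ⟨2, by ring⟩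
    exact ⟨u, hu, by rw [e, pow_one]⟩
  have c1 := H.po_cong _ (q ^ 2) hx (O.pow_mem H.qm _) hx1 k
  have c2 := H.po_cong _ (q ^ 4) hx (O.pow_mem H.qm _) hx1 k
  have hm2 := H.po_mem (q ^ 2) (O.pow_mem H.qm _) k
  have key := H.div_cong (O.pow_mem hm2 2) (u4.pow 2) c1 c2
  have hE : (1 + q ^ (4 * k + 1)) * q ^ k * (po (q ^ 4) (q ^ 2) k / po (q ^ 4) (q ^ 4) k) ∈ O := by
    rw [div_eq_mul_inv]
    exact O.mul_mem (O.mul_mem (O.add_mem O.one_mem (O.pow_mem H.qm _)) (O.pow_mem H.qm _))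
      (O.mul_mem hm2 u4.2.2)
  have := (key.Omul hE).neg
  convert this using 1
  simp only [TT, dd, mul_one]
  rw [← div_pow]
  ring

def Aff (O : Subring K) (π : K) (f : K → K) : Prop :=
  f 1 ∈ O ∧ ∃ β ∈ O, ∀ y, VV O π 1 (y - 1) → VV O π 2 (f y - (f 1 + β * (y - 1)))

lemma Aff.const {c : K} (hc : c ∈ O) : Aff O π fun _ => c :=
  ⟨hc, 0, O.zero_mem, fun y _ => by simpa using VV.zero⟩
lemma Aff.lin {c : K} (hc : c ∈ O) : Aff O π fun y => c * y :=
  ⟨by simpa using hc, c, hc, fun y _ => by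
    rw [show c * y - (c * 1 + c * (y - 1)) = 0 by ring]; exact VV.zero⟩
lemma Aff.add {f g : K → K} (hf : Aff O π f) (hg : Aff O π g) : Aff O π fun y => f y + g y := by
  obtain ⟨f1, b, hb, h⟩ := hf
  obtain ⟨g1, c, hc, h'⟩ := hg
  refine ⟨O.add_mem f1 g1, b + c, O.add_mem hb hc, fun y hy => ?_⟩
  convert (h y hy).add (h' y hy) using 1
  ring
lemma Aff.mul (hp : π ∈ O) {f g : K → K} (hf : Aff O π f) (hg : Aff O π g) :
    Aff O π fun y => f y * g y := by
  obtain ⟨f1, b, hb, h⟩ := hf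
  obtain ⟨g1, c, hc, h'⟩ := hg
  refine ⟨O.mul_mem f1 g1, f 1 * c + b * g 1, O.add_mem (O.mul_mem f1 hc) (O.mul_mem hb g1),
    fun y hy => ?_⟩
  have hy' := hy.mem hp
  have m1 : g 1 + c * (y - 1) ∈ O := O.add_mem g1 (O.mul_mem hc hy')
  have m2 : f y ∈ O := by
    have := O.add_mem ((h y hy).mem hp) (O.add_mem f1 (O.mul_mem hb hy'))
    simpa using this
  convert ((h y hy).mulO m1).add (((h' y hy).mulO m2).add ((hy.mul hy).mulO (O.mul_mem hb hc))) using 1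
  ring
lemma Loc.affInv (H : Loc q n O π) {f : K → K} (hf : Aff O π f) (hu : UU O (f 1)) :
    Aff O π fun y => (f y)⁻¹ := by
  obtain ⟨f1, b, hb, h⟩ := hf
  refine ⟨hu.2.2, - b * ((f 1)⁻¹ * (f 1)⁻¹), O.mul_mem (O.neg_mem hb) (O.mul_mem hu.2.2 hu.2.2),
    fun y hy => ?_⟩
  have hy' := hy.mem H.pim
  have hu' : UU O (f y) := by
    apply H.uadd hu
    convert ((h y hy).mono H.pim (show 1 ≤ 2 by omega)).add (hy.mulO hb) using 1
    ring
  have := hu.1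
  have := hu'.1
  have m1 : - (f y)⁻¹ * (f 1)⁻¹ * ((1 - b * (y - 1) * (f 1)⁻¹)) ∈ O :=
    O.mul_mem (O.mul_mem (O.neg_mem hu'.2.2) hu.2.2)
      (O.sub_mem O.one_mem (O.mul_mem (O.mul_mem hb hy') hu.2.2))
  convert ((h y hy).mulO m1).add ((hy.mul hy).mulO
    (O.mul_mem (O.mul_mem hb hb) (O.mul_mem hu'.2.2 (O.mul_mem hu.2.2 hu.2.2)))) using 1
  field_simp
  ring
lemma Aff.sum {s : Finset ℕ} {f : ℕ → K → K} (hf : ∀ i ∈ s, Aff O π (f i)) :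
    Aff O π fun y => ∑ i ∈ s, f i y := by
  induction s using Finset.induction_on with
  | empty => simpa using Aff.const O.zero_mem
  | insert a s ha ih =>
    simp only [sum_insert ha]
    exact (hf a (by simp)).add (ih fun i hi => hf i (by simp [hi]))

lemma Loc.affPo (H : Loc q n O π) (s k : ℕ) : Aff O π fun y => po (q ^ 4) (q ^ s * y) k := by
  induction k with
  | zero => simpa [po_zero] using Aff.const O.one_mem
  | succ k ih =>
    simp only [po_succ]
    apply ih.mul H.pim
    have := (Aff.const (π := π) O.one_mem).add (Aff.lin (O := O) (π := π) (c := - (q ^ s * (q ^ 4) ^ k))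
      (O.neg_mem (O.mul_mem (O.pow_mem H.qm _) (O.pow_mem (O.pow_mem H.qm _) _))))
    convert this using 2
    ring

lemma Loc.affTT (H : Loc q n O π) (hn : n % 2 = 1) (r : ℕ) (hr : r < n) :
    Aff O π fun y => TT q y r := by
  have hd : Aff O π fun y => dd q y r := by
    simp only [dd, div_eq_mul_inv]
    apply (H.affPo 2 r).mul H.pim
    apply H.affInv (H.affPo 4 r)
    simpa using H.unit4 hn r hr
  simp only [TT, pow_succ (dd _ _ _), pow_zero, one_mul]
  refine Aff.mul H.pim (Aff.mul H.pim (Aff.add (Aff.const O.one_mem) (Aff.lin (O.pow_mem H.qm _)))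
    (Aff.const (O.pow_mem H.qm _))) ?_
  exact (hd.mul H.pim hd).mul H.pim hd

lemma Loc.lemR (g : ℕ) (H : Loc q (4 * g + 3) O π) (m : ℕ) (hm : m % (4 * g + 3) = 2 * g + 1) :
    VV O π 2 (RR q m) := by
  obtain ⟨u3, h3, e3⟩ := H.po_val 3 m (by omega)
  obtain ⟨u5, h5, e5⟩ := H.po_val 5 m (by omega)
  rw [count_lem _ 3 g m (by omega) ⟨1, by ring⟩ (by omega), hm, if_pos (by omega)] at e3
  rw [count_lem _ 5 (3 * g + 1) m (by omega) ⟨3, by ring⟩ (by omega), hm, if_neg (by omega)] at e5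
  have hu2 : UU O (1 - q ^ 2) := H.u1 2 (fun h => by have := Nat.le_of_dvd (by omega) h; omega)
  obtain ⟨u, hu, -, -, e⟩ := H.unif (2 * (2 * m + 1)) (by omega) (by
    rw [← Nat.div_add_mod m (4 * g + 3), hm]
    exact ⟨4 * (m / (4 * g + 3)) + 2, by ring⟩)
  have hg := geom2 q (2 * m + 1)
  rw [e, ← eq_div_iff hu2.1] at hg
  refine ⟨u * (1 - q ^ 2)⁻¹ * u3 * u5⁻¹ * (q ^ m)⁻¹, ?_, ?_⟩
  · exact O.mul_mem (O.mul_mem (O.mul_mem (O.mul_mem hu hu2.2.2) h3.2.1) h5.2.2) (H.uq.pow m).2.2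
  · rw [RR, hg, e3, e5]
    have := hu2.1
    have := h5.1
    have := H.pi0
    have := (H.uq.pow m).1
    simp only [add_zero, pow_succ]
    generalize 1 - q ^ 2 = w at *
    field_simp

lemma Loc.lemC (g : ℕ) (H : Loc q (4 * g + 3) O π) (k : ℕ) :
    VV O π (if 2 * g + 1 < k % (4 * g + 3) then 1 else 0) (dd q 1 k) := by
  obtain ⟨u2, h2, e2⟩ := H.po_val 2 k (by omega)
  obtain ⟨u4, h4, e4⟩ := H.po_val 4 k (by omega)
  have := Nat.mod_lt k (show 0 < 4 * g + 3 by omega)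
  rw [count_lem _ 2 (2 * g + 1) k (by omega) ⟨2, by ring⟩ (by omega)] at e2
  rw [count_lem _ 4 (4 * g + 2) k (by omega) ⟨4, by ring⟩ (by omega), if_neg (by omega)] at e4
  refine ⟨u2 * u4⁻¹, O.mul_mem h2.2.1 h4.2.2, ?_⟩
  have := h4.1
  have := H.pi0
  simp only [dd, mul_one]
  rw [e2, e4, add_zero, pow_add]
  field_simp

lemma Loc.ddmem (g : ℕ) (H : Loc q (4 * g + 3) O π) (k : ℕ) : dd q 1 k ∈ O := (H.lemC g k).mem H.pim

lemma po_add (p x : K) (a b : ℕ) : po p x (a + b) = po p x a * po p (x * p ^ a) b := by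
  simp only [po, prod_range_add, pow_add, mul_assoc]

lemma TT_block (q : K) (a r : ℕ) :
    TT q 1 (a + r) = q ^ a * dd q 1 a ^ 3 * TT q (q ^ (4 * a)) r := by
  simp only [TT, dd, po_add, mul_one, ← pow_mul]
  rw [mul_div_mul_comm, mul_pow, show q ^ (4 * (a + r) + 1) = q ^ (4 * r + 1) * q ^ (4 * a) by ring, pow_add q a r]
  ring

lemma Loc.block (g : ℕ) (H : Loc q (4 * g + 3) O π) (y : K) (hy : VV O π 1 (y - 1)) :
    VV O π 2 (∑ r ∈ range (2 * g + 1 + 1), TT q y r) := by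
  have hX : VV O π 2 (∑ r ∈ range (2 * g + 1 + 1), TT q 1 r) := by
    have H' : Loc q (2 * (2 * g + 1) + 1) O π := by
      convert H using 1; ring
    have := H'.lemX (2 * g + 1)
    have hR := (H.lemR g (2 * g + 1) (Nat.mod_eq_of_lt (by omega))).Omul (O.add_mem O.one_mem H.qm)
    simpa using this.add hR
  have hS := TT_symm_sum q H.q0 H.inj g
  have hA : Aff O π fun y => ∑ r ∈ range (2 * g + 1 + 1), TT q y r :=
    Aff.sum fun r hr => H.affTT (by omega) r (by have := mem_range.1 hr; omega)
  obtain ⟨-, b, hb, h⟩ := hA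
  dsimp only at h
  obtain ⟨u, hu, hu', hu0, e⟩ := H.unif (4 * g + 3) (by omega) dvd_rfl
  have hqn := H.uq.pow (4 * g + 3)
  have hy0 : (q ^ (4 * g + 3))⁻¹ - 1 = π * (u * (q ^ (4 * g + 3))⁻¹) := by
    rw [← mul_assoc, ← e, sub_mul, mul_inv_cancel₀ hqn.1, one_mul]
  have h0 := h _ ⟨_, O.mul_mem hu hqn.2.2, by rw [pow_one]; exact hy0⟩
  rw [hS, hy0] at h0
  have hb1 : VV O π 1 b := by
    obtain ⟨o, ho, eo⟩ := (h0.add hX).neg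
    refine ⟨o * (u⁻¹ * q ^ (4 * g + 3)), O.mul_mem ho (O.mul_mem hu' hqn.2.1), ?_⟩
    have := hqn.1
    have hpi := H.pi0
    apply mul_left_cancel₀ hpi
    have : π * b = (b * (π * (u * (q ^ (4 * g + 3))⁻¹))) * (u⁻¹ * q ^ (4 * g + 3)) := by
      field_simp
    rw [this]
    have : b * (π * (u * (q ^ (4 * g + 3))⁻¹)) = π ^ 2 * o := by
      rw [← eo]; ring
    rw [this]; ring
  convert (h y hy).add (hX.add (hb1.mul hy)) using 1
  ring

lemma Loc.lemY (g : ℕ) (H : Loc q (4 * g + 3) O π) :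
    VV O π 2 (∑ k ∈ range ((4 * g + 3) * (2 * g + 1) + (2 * g + 1) + 1), TT q 1 k) := by
  have hblk : ∀ j, VV O π 2 (∑ r ∈ range (2 * g + 1 + 1), TT q 1 ((4 * g + 3) * j + r)) := by
    intro j
    simp only [TT_block, ← mul_sum]
    refine (H.block g _ ?_).Omul (O.mul_mem (O.pow_mem H.qm _) (O.pow_mem (H.ddmem g _) _))
    rcases Nat.eq_zero_or_pos j with rfl | hj
    · simpa using VV.zero
    · obtain ⟨u, hu, -, -, e⟩ := H.unif (4 * ((4 * g + 3) * j)) (by positivity) ⟨4 * j, by ring⟩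
      have : VV O π 1 (1 - q ^ (4 * ((4 * g + 3) * j))) := ⟨u, hu, by rw [e, pow_one]⟩
      simpa using this.neg
  have hfull : ∀ j, VV O π 2 (∑ k ∈ range ((4 * g + 3) * j), TT q 1 k) := by
    intro j
    induction j with
    | zero => simpa using VV.zero
    | succ j ih =>
      rw [show (4 * g + 3) * (j + 1) = (4 * g + 3) * j + ((2 * g + 1 + 1) + (2 * g + 1)) by ring,
        sum_range_add, sum_range_add]
      refine ih.add ((hblk j).add (VV.sum fun r hr => ?_))
      have hr := mem_range.1 hr
      have hc := H.lemC g ((4 * g + 3) * j + (2 * g + 1 + 1 + r))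
      rw [Nat.mul_add_mod, Nat.mod_eq_of_lt (by omega), if_pos (by omega)] at hc
      rw [TT, pow_succ (dd _ _ _), pow_two]
      refine (((hc.mul hc).mulO (hc.mem H.pim))).Omul ?_
      rw [mul_one]
      exact O.mul_mem (O.add_mem O.one_mem (O.pow_mem H.qm _)) (O.pow_mem H.qm _)
  rw [add_assoc, sum_range_add]
  exact (hfull _).add (hblk _)
end loc2

/-- local ring of rational functions regular at a prime polynomial -/
noncomputable def OO (P : Polynomial ℚ) (hP : Prime P) : Subring (RatFunc ℚ) where
  carrier := {f | ∃ a b : Polynomial ℚ, ¬ P ∣ b ∧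
    f * algebraMap (Polynomial ℚ) (RatFunc ℚ) b = algebraMap (Polynomial ℚ) (RatFunc ℚ) a}
  mul_mem' := by
    rintro f g ⟨a, b, hb, h⟩ ⟨a', b', hb', h'⟩
    refine ⟨a * a', b * b', fun hd => (hP.dvd_or_dvd hd).elim hb hb', ?_⟩
    rw [map_mul, map_mul, ← h, ← h']; ring
  one_mem' := ⟨1, 1, fun h => hP.not_isUnit (isUnit_of_dvd_one h), by simp⟩
  add_mem' := by
    rintro f g ⟨a, b, hb, h⟩ ⟨a', b', hb', h'⟩
    refine ⟨a * b' + a' * b, b * b', fun hd => (hP.dvd_or_dvd hd).elim hb hb', ?_⟩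
    rw [map_mul, map_add, map_mul, map_mul, ← h, ← h']; ring
  zero_mem' := ⟨0, 1, fun h => hP.not_isUnit (isUnit_of_dvd_one h), by simp⟩
  neg_mem' := by
    rintro f ⟨a, b, hb, h⟩
    exact ⟨-a, b, hb, by rw [map_neg, ← h]; ring⟩

lemma OO_poly (P : Polynomial ℚ) (hP : Prime P) (a : Polynomial ℚ) :
    algebraMap (Polynomial ℚ) (RatFunc ℚ) a ∈ OO P hP :=
  ⟨a, 1, fun h => hP.not_isUnit (isUnit_of_dvd_one h), by simp⟩

lemma OO_unit (P : Polynomial ℚ) (hP : Prime P) (b : Polynomial ℚ) (hb : ¬ P ∣ b) :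
    UU (OO P hP) (algebraMap (Polynomial ℚ) (RatFunc ℚ) b) := by
  have h0 : algebraMap (Polynomial ℚ) (RatFunc ℚ) b ≠ 0 := by
    rw [Ne, map_eq_zero_iff _ (RatFunc.algebraMap_injective ℚ)]
    rintro rfl; simp at hb
  exact ⟨h0, OO_poly _ _ _, 1, b, hb, by rw [inv_mul_cancel₀ h0, map_one]⟩

lemma cyc_prime (N : ℕ) (hN : 0 < N) : Prime (cyclotomic N ℚ) :=
  (cyclotomic.irreducible_rat hN).prime

lemma cyc_not_dvd (N : ℕ) (hN : 0 < N) (s : Finset ℕ) (h : N ∉ s) :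
    ¬ cyclotomic N ℚ ∣ ∏ d ∈ s, cyclotomic d ℚ := by
  intro hd
  obtain ⟨d, hds, hd⟩ := (cyc_prime N hN).exists_mem_finset_dvd hd
  have hne : N ≠ d := by rintro rfl; exact h hds
  exact (cyc_prime N hN).not_isUnit ((cyclotomic.isCoprime_rat hne).isUnit_of_dvd' dvd_rfl hd)

lemma Qmap : Q = algebraMap (Polynomial ℚ) (RatFunc ℚ) X := by rw [Q, RatFunc.algebraMap_X]

lemma Qmap1 (e : ℕ) : 1 - Q ^ e = algebraMap (Polynomial ℚ) (RatFunc ℚ) (-(X ^ e - 1)) := by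
  rw [Qmap]; simp

lemma Qloc (N : ℕ) (hN : 1 < N) : Loc Q N (OO (cyclotomic N ℚ) (cyc_prime N (by omega)))
    (algebraMap (Polynomial ℚ) (RatFunc ℚ) (cyclotomic N ℚ)) where
  q0 := by rw [Q]; exact RatFunc.X_ne_zero
  inj := by
    intro a b hab h
    rw [Qmap, ← map_pow, ← map_pow] at h
    have h := RatFunc.algebraMap_injective ℚ h
    have := congrArg natDegree h
    simp at this
    exact hab this
  pim := OO_poly _ _ _
  pi0 := by
    rw [Ne, map_eq_zero_iff _ (RatFunc.algebraMap_injective ℚ)]; exact cyclotomic_ne_zero _ _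
  qm := by rw [Qmap]; exact OO_poly _ _ _
  qi := by
    rw [Qmap]
    refine (OO_unit _ _ X ?_).2.2
    intro h
    obtain ⟨c, hc⟩ := h
    have := congrArg (coeff · 0) hc
    have h1 := congrArg natDegree hc
    rw [natDegree_X, natDegree_mul (cyclotomic_ne_zero _ _) (by rintro rfl; simp at hc)] at h1
    simp [mul_coeff_zero, cyclotomic_coeff_zero ℚ hN] at this
    have hd : cyclotomic N ℚ ∣ X := ⟨c, hc⟩
    have hX : (X : Polynomial ℚ) ∣ c := X_dvd_iff.2 this.symm
    obtain ⟨e, rfl⟩ := hX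
    have : (1 : Polynomial ℚ) = cyclotomic N ℚ * e := by
      apply mul_left_cancel₀ (X_ne_zero (R := ℚ))
      rw [mul_one]; nth_rewrite 1 [hc]; ring
    exact (cyc_prime N (by omega)).not_isUnit (isUnit_of_dvd_one ⟨e, this⟩)
  unit := by
    intro e he
    have he0 : 0 < e := Nat.pos_of_ne_zero (by rintro rfl; simp at he)
    rw [Qmap1]
    refine (OO_unit _ _ _ ?_).2.2
    rw [dvd_neg, ← prod_cyclotomic_eq_X_pow_sub_one he0]
    exact cyc_not_dvd N (by omega) _ (by simp [he])
  unif := by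
    intro e he hd
    have hm : N ∈ e.divisors := by simp [hd]; omega
    have hu := OO_unit _ (cyc_prime N (by omega)) (-∏ d ∈ e.divisors.erase N, cyclotomic d ℚ) (by
      rw [dvd_neg]; exact cyc_not_dvd N (by omega) _ (by simp))
    refine ⟨_, hu.2.1, hu.2.2, hu.1, ?_⟩
    rw [Qmap1, ← prod_cyclotomic_eq_X_pow_sub_one he, ← mul_prod_erase _ _ hm, ← map_mul]
    congr 1; ring
  loc := by
    rintro o ⟨a, b, hb, h⟩
    have hP := cyc_prime N (by omega)
    have h1 := OO_unit _ hP b hb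
    have h2 := OO_unit _ hP (b + cyclotomic N ℚ * a) (fun hd =>
      hb ((dvd_add_left (dvd_mul_right _ _)).1 hd))
    have e : 1 + algebraMap (Polynomial ℚ) (RatFunc ℚ) (cyclotomic N ℚ) * o =
      algebraMap (Polynomial ℚ) (RatFunc ℚ) (b + cyclotomic N ℚ * a) *
        (algebraMap (Polynomial ℚ) (RatFunc ℚ) b)⁻¹ := by
      rw [map_add, map_mul, ← h, eq_mul_inv_iff_mul_eq₀ h1.1]; ring
    have := h2.mul h1.inv
    rw [e]
    exact ⟨this.1, this.2.2⟩

lemma VV_num (P : Polynomial ℚ) (hP : Prime P) (f : RatFunc ℚ)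
    (h : VV (OO P hP) (algebraMap (Polynomial ℚ) (RatFunc ℚ) P) 2 f) :
    P ^ 2 ∣ f.num ∧ ¬ P ∣ f.denom := by
  obtain ⟨o, ⟨a, b, hb, e⟩, hf⟩ := h
  have hd0 : algebraMap (Polynomial ℚ) (RatFunc ℚ) f.denom ≠ 0 := by
    rw [Ne, map_eq_zero_iff _ (RatFunc.algebraMap_injective ℚ)]; exact f.denom_ne_zero
  have key : f.num * b = P ^ 2 * a * f.denom := by
    apply RatFunc.algebraMap_injective ℚ
    rw [map_mul, map_mul, map_mul, ← e, map_pow, ← mul_assoc, ← hf]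
    nth_rewrite 2 [← RatFunc.num_div_denom f]
    field_simp
  have hnum : P ^ 2 ∣ f.num := by
    have h1 : P ^ 2 ∣ f.num * b := ⟨a * f.denom, by rw [key]; ring⟩
    exact hP.pow_dvd_of_dvd_mul_right 2 hb h1
  refine ⟨hnum, fun hd => ?_⟩
  exact hP.not_isUnit ((RatFunc.isCoprime_num_denom f).isUnit_of_dvd'
    ((dvd_pow_self P two_ne_zero).trans hnum) hd)

/-- For `n ≡ 3 (mod 4)` positive, modulo `Φ_n(q)^2 Φ_{n^2}(q)^2`:
`∑_{k=0}^{(n^2-1)/2} (1+q^{4k+1})(q^2;q^4)_k^3 q^k / ((1+q)(q^4;q^4)_k^3)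
 ≡ [n^2]_{q^2} (q^3;q^4)_{(n^2-1)/2} / (q^5;q^4)_{(n^2-1)/2} · q^{(1-n^2)/2}`. -/
theorem stmt5 (n : ℕ) (hn : 0 < n) (h : n % 4 = 3) :
    ∃ a b : Polynomial ℚ, ¬ (Polynomial.cyclotomic n ℚ ∣ b) ∧
      ¬ (Polynomial.cyclotomic (n ^ 2) ℚ ∣ b) ∧
      ((∑ k ∈ Finset.range ((n ^ 2 - 1) / 2 + 1),
          (1 + Q ^ (4 * k + 1)) * qPoch (Q ^ 2) (Q ^ 4) k ^ 3 * Q ^ k /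
            ((1 + Q) * qPoch (Q ^ 4) (Q ^ 4) k ^ 3))
        - (∑ i ∈ Finset.range (n ^ 2), Q ^ (2 * i))
            * qPoch (Q ^ 3) (Q ^ 4) ((n ^ 2 - 1) / 2)
            / qPoch (Q ^ 5) (Q ^ 4) ((n ^ 2 - 1) / 2)
            * (Q ^ ((n ^ 2 - 1) / 2))⁻¹)
        * algebraMap (Polynomial ℚ) (RatFunc ℚ) b
      = algebraMap (Polynomial ℚ) (RatFunc ℚ)
          (Polynomial.cyclotomic n ℚ ^ 2 * Polynomial.cyclotomic (n ^ 2) ℚ ^ 2 * a) := by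
  obtain ⟨g, rfl⟩ : ∃ g, n = 4 * g + 3 := ⟨n / 4, by omega⟩
  obtain ⟨m, hm⟩ : ∃ m, m = (4 * g + 3) * (2 * g + 1) + (2 * g + 1) := ⟨_, rfl⟩
  have hN : (4 * g + 3) ^ 2 = 2 * m + 1 := by rw [hm]; ring
  have hlt : 4 * g + 3 < 2 * m + 1 := by rw [← hN]; nlinarith
  have hmod : m % (4 * g + 3) = 2 * g + 1 := by
    rw [hm, Nat.mul_add_mod, Nat.mod_eq_of_lt (by omega)]
  rw [hN, show (2 * m + 1 - 1) / 2 = m by omega]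
  have hsum : (∑ k ∈ Finset.range (m + 1),
          (1 + Q ^ (4 * k + 1)) * qPoch (Q ^ 2) (Q ^ 4) k ^ 3 * Q ^ k /
            ((1 + Q) * qPoch (Q ^ 4) (Q ^ 4) k ^ 3))
        - (∑ i ∈ Finset.range (2 * m + 1), Q ^ (2 * i))
            * qPoch (Q ^ 3) (Q ^ 4) m / qPoch (Q ^ 5) (Q ^ 4) m * (Q ^ m)⁻¹ =
      (1 + Q)⁻¹ * (∑ k ∈ Finset.range (m + 1), TT Q 1 k) - RR Q m := by
    rw [mul_sum]
    congr 1
    apply sum_congr rfl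
    intro k _
    simp only [TT, dd, mul_one]
    change (1 + Q ^ (4 * k + 1)) * po (Q ^ 4) (Q ^ 2) k ^ 3 * Q ^ k /
            ((1 + Q) * po (Q ^ 4) (Q ^ 4) k ^ 3) = _
    rw [div_pow]
    simp only [div_eq_mul_inv, mul_inv]
    ring
  rw [hsum]
  have H1 := Qloc (4 * g + 3) (by omega)
  have H2 := Qloc (2 * m + 1) (by omega)
  have hinv : ∀ (N : ℕ) (O : Subring (RatFunc ℚ)) (π : RatFunc ℚ), 2 < N → Loc Q N O π →
      UU O (1 + Q) := by
    intro N O π hN H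
    have u1 := H.u1 1 (fun h => by have := Nat.le_of_dvd (by omega) h; omega)
    have u2 := H.u1 2 (fun h => by have := Nat.le_of_dvd (by omega) h; omega)
    have e : 1 + Q = (1 - Q ^ 2) * (1 - Q ^ 1)⁻¹ := by
      rw [eq_mul_inv_iff_mul_eq₀ u1.1]; ring
    rw [e]; exact u2.mul u1.inv
  have i1 := hinv _ _ _ (by omega) H1
  have i2 := hinv _ _ _ (by omega) H2
  have v1 := ((H1.lemY g).Omul i1.2.2).sub (H1.lemR g m hmod)
  rw [← hm] at v1
  have v2 := (H2.lemX m).Omul i2.2.2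
  rw [mul_sub, ← mul_assoc (1 + Q)⁻¹ (1 + Q), inv_mul_cancel₀ i2.1, one_mul] at v2
  generalize (1 + Q)⁻¹ * (∑ k ∈ Finset.range (m + 1), TT Q 1 k) - RR Q m = f at *
  obtain ⟨d1, nd1⟩ := VV_num _ _ _ v1
  obtain ⟨d2, nd2⟩ := VV_num _ _ _ v2
  have hcop : IsCoprime (cyclotomic (4 * g + 3) ℚ ^ 2) (cyclotomic (2 * m + 1) ℚ ^ 2) :=
    (cyclotomic.isCoprime_rat (by omega)).pow
  obtain ⟨a, ha⟩ := hcop.mul_dvd d1 d2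
  refine ⟨a, f.denom, nd1, nd2, ?_⟩
  rw [← ha]
  have hd0 : algebraMap (Polynomial ℚ) (RatFunc ℚ) f.denom ≠ 0 := by
    rw [Ne, map_eq_zero_iff _ (RatFunc.algebraMap_injective ℚ)]; exact f.denom_ne_zero
  nth_rewrite 1 [← RatFunc.num_div_denom f]
  field_simp
end
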